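/- Let p, q ≥ 2 be integers such that p^r ≠ q^s for all positive integers r and s (equivalently, log p / log q is irrational). Then the set of real numbers x ∈ [0,1) that are normal to base p but not simply normal to base q has the cardinality of the continuum (Schmidt, part 2). -/

import Mathlib

open Filter MeasureTheory Topology
open scoped Classical

/-- The `(n+1)`-st digit (i.e. `ε_{n+1}`, `0`-indexed by `n`) of the base-`q` expansion of `x`,
chosen as the greedy expansion (never eventually equal to `q - 1`). -/
noncomputable def qdigit (q : ℕ) (x : ℝ) (n : ℕ) : ℕ :=
  (⌊x * (q : ℝ) ^ (n + 1)⌋).toNat % q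

/-- `x` is normal to base `q`: every word `d` of length `m ≥ 1` over `{0, …, q-1}` occurs in the
base-`q` digit sequence of `x` with frequency `q^{-m}`. -/
def IsNormal (q : ℕ) (x : ℝ) : Prop :=
  ∀ m : ℕ, 0 < m → ∀ d : Fin m → ℕ, (∀ i, d i < q) →
    Tendsto
      (fun N : ℕ =>
        (((Finset.range N).filter fun n =>
          ∀ i : Fin m, qdigit q x (n + (i : ℕ)) = d i).card : ℝ) / N)
      atTop (𝓝 (((q : ℝ) ^ m)⁻¹))

/-- `x` is simply normal to base `q`: every digit `d ∈ {0, …, q-1}` occurs in the base-`q` digit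
sequence of `x` with frequency `1/q`. -/
def IsSimplyNormal (q : ℕ) (x : ℝ) : Prop :=
  ∀ d : ℕ, d < q →
    Tendsto
      (fun N : ℕ => (((Finset.range N).filter fun n => qdigit q x n = d).card : ℝ) / N)
      atTop (𝓝 ((q : ℝ)⁻¹))

open scoped BigOperators FourierTransform

/-!
Take `Q = q ^ 3` and real numbers whose base-`Q` digits are all `0` or `1`. At least two thirds of
their base-`q` digits vanish, so none of them is simply normal to base `q`. It remains to choose the
bits so that the number is normal to base `p`, while leaving infinitely many bits free.

By Weyl's criterion, normality of `x` to base `p` means that the averages of `𝐞 (h pⁿ x)` tend to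
zero for every `h > 0`. Cut the exponents `n` into blocks of lengths tending to infinity but
negligible compared with everything before them, and choose the base-`Q` bits at the positions
governing one block after another. When these bits are random, the mean square of the block average
is the average over pairs `n, m` of the products `∏ |cos (π h (pⁿ - pᵐ) Q⁻ᵏ⁻¹)|`. If `n` is much
larger than `m`, the subtraction of `pᵐ` hardly changes the leading base-`Q` digits, and the product
is controlled by a function of the mantissa `pⁿ / Q ^ ⌊log_Q pⁿ⌋`. As `log_Q p` is irrational, the
logarithms of these mantissas equidistribute, so the mean square is eventually smaller than the
corresponding integral, which decays geometrically in the number of cosine factors. Hence some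
choice of the bits of each block makes its averages small for all frequencies at once.
-/

section Equidistribution

variable {ι κ : Type*} {l : Filter ι} {s : ι → Finset κ} {y : κ → UnitAddCircle}

/-- The averages over `s i` of any continuous function along the points `y` converge to its
integral, as `i → l`. Intervals `s i` with varying left endpoints are the reason for not
restricting to initial segments of `ℕ`. -/
def EquidistributedAlong (l : Filter ι) (s : ι → Finset κ) (y : κ → UnitAddCircle) : Prop :=
  ∀ f : C(UnitAddCircle, ℂ), Tendsto (fun i => 𝔼 n ∈ s i, f (y n)) l (𝓝 (∫ t, f t))

instance : IsProbabilityMeasure (volume : Measure UnitAddCircle) := ⟨UnitAddCircle.measure_univ⟩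

theorem integral_fourier {k : ℤ} (hk : k ≠ 0) : ∫ t : UnitAddCircle, fourier k t = 0 := by
  have h := congrFun (fourierCoeff_fourier (T := 1) k) 0
  rw [fourierCoeff, Pi.single_eq_of_ne hk.symm] at h
  simpa [AddCircle.volume_eq_smul_haarAddCircle] using h

theorem lipschitzWith_expect_apply (s : Finset κ) (y : κ → UnitAddCircle) :
    LipschitzWith 1 fun f : C(UnitAddCircle, ℂ) => 𝔼 n ∈ s, f (y n) := by
  refine LipschitzWith.mk_one fun f g => ?_
  rcases s.eq_empty_or_nonempty with rfl | hs
  · simp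
  rw [dist_eq_norm, ← Finset.expect_sub_distrib]
  calc ‖𝔼 n ∈ s, (f (y n) - g (y n))‖ ≤ 𝔼 n ∈ s, ‖f (y n) - g (y n)‖ :=
        RCLike.norm_expect_le (K := ℂ)
    _ ≤ 𝔼 _n ∈ s, dist f g := Finset.expect_le_expect fun n _ => by
        rw [← dist_eq_norm]; exact ContinuousMap.dist_apply_le_dist _
    _ = dist f g := Finset.expect_const hs _

theorem lipschitzWith_integral (μ : Measure UnitAddCircle) [IsProbabilityMeasure μ] :
    LipschitzWith 1 fun f : C(UnitAddCircle, ℂ) => ∫ t, f t ∂μ := by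
  have integrable (f : C(UnitAddCircle, ℂ)) : Integrable f μ :=
    f.continuous.integrable_of_hasCompactSupport (.of_compactSpace _)
  refine LipschitzWith.mk_one fun f g => ?_
  rw [dist_eq_norm, ← integral_sub (integrable f) (integrable g)]
  simpa using norm_integral_le_of_norm_le_const (μ := μ) (C := dist f g) <|
    .of_forall fun t => (dist_eq_norm (f t) (g t)).symm.trans_le (f.dist_apply_le_dist t)

theorem EquidistributedAlong.of_fourier (hs : ∀ᶠ i in l, (s i).Nonempty)
    (h : ∀ k : ℤ, k ≠ 0 → Tendsto (fun i => 𝔼 n ∈ s i, fourier k (y n)) l (𝓝 0)) :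
    EquidistributedAlong l s y := by
  have integrable (f : C(UnitAddCircle, ℂ)) : Integrable f volume :=
    f.continuous.integrable_of_hasCompactSupport (.of_compactSpace _)
  have hclosed : IsClosed {f : C(UnitAddCircle, ℂ) |
      Tendsto (fun i => 𝔼 n ∈ s i, f (y n)) l (𝓝 (∫ t, f t))} :=
    (LipschitzWith.uniformEquicontinuous _ 1 fun i =>
      lipschitzWith_expect_apply (s i) y).equicontinuous.isClosed_setOfPred_tendsto
        (lipschitzWith_integral _).continuous
  have hspan : (Submodule.span ℂ (Set.range (@fourier 1)) : Set C(UnitAddCircle, ℂ)) ⊆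
      {f | Tendsto (fun i => 𝔼 n ∈ s i, f (y n)) l (𝓝 (∫ t, f t))} := by
    intro f hf
    induction hf using Submodule.span_induction with
    | mem f hf =>
      obtain ⟨k, rfl⟩ := hf
      rcases eq_or_ne k 0 with rfl | hk
      · refine tendsto_const_nhds.congr' (hs.mono fun i hi => ?_)
        simp [Finset.expect_const hi]
      · simpa only [Set.mem_ofPred_eq, integral_fourier hk] using h k hk
    | zero => simpa using tendsto_const_nhds
    | add f g _ _ hf hg =>
      simpa [Finset.expect_add_distrib, integral_add (integrable f) (integrable g)]
        using hf.add hg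
    | smul c f _ hf => simpa [Finset.mul_expect, integral_const_mul] using hf.const_mul c
  intro f
  have hf : f ∈ (Submodule.span ℂ (Set.range (@fourier 1))).topologicalClosure :=
    span_fourier_closure_eq_top (T := 1) ▸ Submodule.mem_top
  exact closure_minimal hspan hclosed hf

theorem EquidistributedAlong.tendsto_expect_real (h : EquidistributedAlong l s y)
    {f : UnitAddCircle → ℝ} (hf : Continuous f) :
    Tendsto (fun i => 𝔼 n ∈ s i, f (y n)) l (𝓝 (∫ t, f t)) := by
  have := (Complex.continuous_re.tendsto _).comp (h ⟨fun t => (f t : ℂ), by fun_prop⟩)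
  simp only [ContinuousMap.coe_mk, integral_complex_ofReal, Complex.ofReal_re] at this
  refine this.congr fun i => ?_
  rw [Function.comp, ← Complex.ofReal_re (𝔼 n ∈ s i, f (y n))]
  simp

/-- The uniform probability measure on the points `y 0, …, y N`. -/
noncomputable def empiricalMeasure (y : ℕ → UnitAddCircle) (N : ℕ) :
    ProbabilityMeasure UnitAddCircle :=
  ⟨((N + 1 : ℕ) : ENNReal)⁻¹ • ∑ n ∈ Finset.range (N + 1), Measure.dirac (y n), ⟨by
    simp [ENNReal.inv_mul_cancel]⟩⟩

theorem integral_empiricalMeasure (y : ℕ → UnitAddCircle) (N : ℕ) (f : UnitAddCircle → ℝ) :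
    ∫ t, f t ∂(empiricalMeasure y N : Measure UnitAddCircle) =
      𝔼 n ∈ Finset.range (N + 1), f (y n) := by
  have h (n : ℕ) (_ : n ∈ Finset.range (N + 1)) : Integrable f (Measure.dirac (y n)) :=
    integrable_dirac (by simp)
  rw [empiricalMeasure, ProbabilityMeasure.coe_mk, integral_smul_measure,
    integral_finsetSum_measure h, Finset.expect_eq_sum_div_card]
  simp [div_eq_inv_mul, ENNReal.toReal_add]

theorem empiricalMeasure_apply (y : ℕ → UnitAddCircle) (N : ℕ) (E : Set UnitAddCircle) :
    (empiricalMeasure y N E : ℝ) =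
      ((Finset.range (N + 1)).filter fun n => y n ∈ E).card / ((N + 1 : ℕ) : ℝ) := by
  rw [← ProbabilityMeasure.measureReal_eq_coe_coeFn, empiricalMeasure, ProbabilityMeasure.coe_mk,
    measureReal_def]
  simp [div_eq_inv_mul, ENNReal.toReal_add, Measure.dirac_apply, Set.indicator_apply]

theorem EquidistributedAlong.tendsto_card_filter_mem_div {y : ℕ → UnitAddCircle}
    (h : EquidistributedAlong atTop Finset.range y) {E : Set UnitAddCircle}
    (hE : volume (frontier E) = 0) :
    Tendsto (fun N : ℕ => (((Finset.range N).filter fun n => y n ∈ E).card : ℝ) / N) atTop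
      (𝓝 (volume.real E)) := by
  have hlim : Tendsto (empiricalMeasure y) atTop (𝓝 ⟨volume, inferInstance⟩) :=
    ProbabilityMeasure.tendsto_iff_forall_integral_tendsto.2 fun f => by
      simpa only [integral_empiricalMeasure, ProbabilityMeasure.coe_mk] using
        (tendsto_add_atTop_iff_nat 1).2 (h.tendsto_expect_real f.continuous)
  have hE' := ProbabilityMeasure.tendsto_measure_of_null_frontier_of_tendsto hlim (E := E)
    (by simp [hE])
  rw [← tendsto_add_atTop_iff_nat 1]
  refine ((NNReal.continuous_coe.tendsto _).comp hE').congr fun N => ?_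
  exact empiricalMeasure_apply y N E

theorem ball_subset_coe_image_Ico (a b : ℝ) :
    Metric.ball (((a + b) / 2 : ℝ) : UnitAddCircle) ((b - a) / 2) ⊆ (↑) '' Set.Ico a b := by
  intro t ht
  induction t using QuotientAddGroup.induction_on with | H z => ?_
  rw [Metric.mem_ball, dist_eq_norm, ← AddCircle.coe_sub, UnitAddCircle.norm_eq, abs_lt] at ht
  refine ⟨z - round (z - (a + b) / 2), ⟨by linarith, by linarith⟩, ?_⟩
  simp

theorem coe_image_Ico_subset_closedBall (a b : ℝ) :
    (↑) '' Set.Ico a b ⊆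
      Metric.closedBall (((a + b) / 2 : ℝ) : UnitAddCircle) ((b - a) / 2) := by
  rintro _ ⟨z, hz, rfl⟩
  rw [Metric.mem_closedBall, dist_eq_norm, ← AddCircle.coe_sub]
  refine QuotientAddGroup.norm_mk_le_norm.trans (abs_le.2 ⟨?_, ?_⟩) <;> linarith [hz.1, hz.2]

theorem volume_frontier_coe_image_Ico (a b : ℝ) :
    volume (frontier ((↑) '' Set.Ico a b : Set UnitAddCircle)) = 0 := by
  refine measure_mono_null (Set.sdiff_subset_sdiff ?_ ?_)
    (ae_le_set.1 (AddCircle.closedBall_ae_eq_ball (x := (((a + b) / 2 : ℝ) : UnitAddCircle))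
      (ε := (b - a) / 2)).le)
  · exact closure_minimal (coe_image_Ico_subset_closedBall a b) Metric.isClosed_closedBall
  · exact interior_maximal (ball_subset_coe_image_Ico a b) Metric.isOpen_ball

theorem volume_real_coe_image_Ico {a b : ℝ} (hab : a ≤ b) (hba : b ≤ a + 1) :
    volume.real ((↑) '' Set.Ico a b : Set UnitAddCircle) = b - a := by
  have hball : volume.real (Metric.closedBall (((a + b) / 2 : ℝ) : UnitAddCircle) ((b - a) / 2))
      = b - a := by
    rw [measureReal_def, AddCircle.volume_closedBall, min_eq_right (by linarith),
      ENNReal.toReal_ofReal (by linarith)]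
    ring
  refine le_antisymm (hball ▸ measureReal_mono (coe_image_Ico_subset_closedBall a b)) ?_
  rw [← hball, measureReal_congr AddCircle.closedBall_ae_eq_ball]
  exact measureReal_mono (ball_subset_coe_image_Ico a b)

theorem coe_fract (z : ℝ) : ((Int.fract z : ℝ) : UnitAddCircle) = z := by
  simp [← Int.self_sub_floor]

theorem coe_mem_coe_image_Ico_iff {a b : ℝ} (ha : 0 ≤ a) (hb : b ≤ 1) (z : ℝ) :
    (z : UnitAddCircle) ∈ ((↑) '' Set.Ico a b : Set UnitAddCircle) ↔
      Int.fract z ∈ Set.Ico a b := by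
  refine ⟨?_, fun hz => ⟨_, hz, coe_fract z⟩⟩
  rintro ⟨w, hw, hwz⟩
  have : w = Int.fract z := (AddCircle.coe_eq_coe_iff_of_mem_Ico (p := 1) (a := 0)
    (by constructor <;> linarith [hw.1, hw.2])
    ⟨Int.fract_nonneg z, by simpa using Int.fract_lt_one z⟩).1 (hwz.trans (coe_fract z).symm)
  exact this ▸ hw

theorem EquidistributedAlong.tendsto_card_filter_fract_mem_Ico_div {x : ℕ → ℝ}
    (h : EquidistributedAlong atTop Finset.range fun n => (x n : UnitAddCircle))
    {a b : ℝ} (ha : 0 ≤ a) (hab : a ≤ b) (hb : b ≤ 1) :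
    Tendsto (fun N : ℕ =>
      (((Finset.range N).filter fun n => Int.fract (x n) ∈ Set.Ico a b).card : ℝ) / N) atTop
      (𝓝 (b - a)) := by
  simpa only [coe_mem_coe_image_Ico_iff ha hb, volume_real_coe_image_Ico hab (by linarith)] using
    h.tendsto_card_filter_mem_div (volume_frontier_coe_image_Ico a b)

theorem EquidistributedAlong.of_fourierChar {x : κ → ℝ} (hs : ∀ᶠ i in l, (s i).Nonempty)
    (h : ∀ k : ℕ, 0 < k → Tendsto (fun i => 𝔼 n ∈ s i, (𝐞 (k * x n) : ℂ)) l (𝓝 0)) :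
    EquidistributedAlong l s fun n => (x n : UnitAddCircle) := by
  have hpos (k : ℕ) (z : ℝ) : fourier k (z : UnitAddCircle) = (𝐞 (k * z) : ℂ) := by
    rw [fourier_coe_apply, Real.fourierChar_apply]
    push_cast
    congr 1
    ring
  refine .of_fourier hs fun k hk => ?_
  obtain ⟨k, rfl | rfl⟩ := k.eq_nat_or_neg
  · simpa only [hpos] using h k (by omega)
  · have hconj := (Complex.continuous_conj.tendsto _).comp (h k (by omega))
    rw [map_zero] at hconj
    refine hconj.congr fun i => ?_
    simp only [Function.comp, fourier_neg, hpos, Finset.expect_eq_sum_div_card, map_div₀, map_sum,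
      Complex.conj_natCast]

theorem EquidistributedAlong.tendsto_expect_comp_fract {x : κ → ℝ}
    (h : EquidistributedAlong l s fun n => (x n : UnitAddCircle)) {g : ℝ → ℝ}
    (hg : ContinuousOn g (Set.Icc 0 1)) (h01 : g 0 = g 1) :
    Tendsto (fun i => 𝔼 n ∈ s i, g (Int.fract (x n))) l (𝓝 (∫ y in (0 : ℝ)..1, g y)) := by
  have hlift {y : ℝ} (hy : y ∈ Set.Ico (0 : ℝ) 1) :
      AddCircle.liftIco 1 0 g (y : UnitAddCircle) = g y := AddCircle.liftIco_zero_coe_apply hy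
  have hfract (z : ℝ) : AddCircle.liftIco 1 0 g (z : UnitAddCircle) = g (Int.fract z) := by
    rw [← hlift ⟨Int.fract_nonneg z, Int.fract_lt_one z⟩, coe_fract]
  have hint : ∫ t, AddCircle.liftIco 1 0 g t = ∫ y in (0 : ℝ)..1, g y := by
    rw [← UnitAddCircle.intervalIntegral_preimage 0, zero_add]
    refine intervalIntegral.integral_congr_ae ?_
    filter_upwards [compl_mem_ae_iff.2 (measure_singleton (1 : ℝ))] with y hy1 hy
    rw [Set.uIoc_of_le zero_le_one] at hy
    exact hlift ⟨hy.1.le, hy.2.lt_of_ne hy1⟩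
  simpa only [hfract, hint] using
    h.tendsto_expect_real (AddCircle.liftIco_zero_continuous h01 hg)

end Equidistribution

section Rotation

theorem norm_expect_Ico_pow_le {w : ℂ} (hw : ‖w‖ = 1) (hw1 : w ≠ 1) (M L : ℕ) :
    ‖𝔼 n ∈ Finset.Ico M (M + L), w ^ n‖ ≤ 2 / ‖w - 1‖ / L := by
  rw [Finset.expect_eq_sum_div_card, Nat.card_Ico, add_tsub_cancel_left,
    geom_sum_Ico hw1 (Nat.le_add_right M L), norm_div, norm_div, Complex.norm_natCast]
  gcongr
  calc ‖w ^ (M + L) - w ^ M‖ ≤ ‖w ^ (M + L)‖ + ‖w ^ M‖ := norm_sub_le _ _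
    _ = 2 := by simp [hw]; norm_num

theorem equidistributedAlong_Ico_nsmul {ι : Type*} {l : Filter ι} {θ : UnitAddCircle}
    (hθ : ¬IsOfFinAddOrder θ) (M : ι → ℕ) {L : ι → ℕ} (hL : Tendsto L l atTop) :
    EquidistributedAlong l (fun i => Finset.Ico (M i) (M i + L i)) fun n => n • θ := by
  refine .of_fourier ?_ fun k hk => ?_
  · filter_upwards [hL.eventually_gt_atTop 0] with i hi
    simpa using hi
  have hk1 : fourier k θ ≠ 1 := by
    rw [fourier_apply, Ne, Circle.coe_eq_one, ← AddCircle.toCircle_zero,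
      (AddCircle.injective_toCircle one_ne_zero).eq_iff]
    exact fun h => hθ (isOfFinAddOrder_iff_zsmul_eq_zero.2 ⟨k, hk, h⟩)
  have hlim : Tendsto (fun i => 2 / ‖fourier k θ - 1‖ / (L i : ℝ)) l (𝓝 0) :=
    (tendsto_const_div_atTop_nhds_zero_nat _).comp hL
  refine squeeze_zero_norm (fun i => ?_) hlim
  have hpow (n : ℕ) : fourier k (n • θ) = fourier k θ ^ n := by
    simp only [fourier_apply, smul_comm k n θ, AddCircle.toCircle_nsmul, Circle.coe_pow]
  simp only [hpow]
  exact norm_expect_Ico_pow_le (Circle.norm_coe _) hk1 _ _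

end Rotation

section Digits

theorem qdigit_add (q : ℕ) {x : ℝ} (hx : 0 ≤ x) (k n : ℕ) :
    qdigit q x (k + n) = qdigit q (Int.fract (x * (q : ℝ) ^ k)) n := by
  have hsplit : x * (q : ℝ) ^ (k + n + 1) =
      Int.fract (x * (q : ℝ) ^ k) * (q : ℝ) ^ (n + 1) +
        ((⌊x * (q : ℝ) ^ k⌋₊ * q ^ n * q : ℕ) : ℝ) := by
    push_cast
    rw [natCast_floor_eq_intCast_floor (by positivity), ← Int.self_sub_fract]
    ring
  simp only [qdigit, Int.floor_toNat]
  rw [hsplit, Nat.floor_add_natCast (by positivity), Nat.add_mul_mod_self_right]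

theorem qdigit_zero_eq_iff {q d : ℕ} (hd : d < q) {z : ℝ} (hz : z ∈ Set.Ico (0 : ℝ) 1) :
    qdigit q z 0 = d ↔ ⌊z * q⌋ = d := by
  have hfloor : ⌊z * (q : ℝ)⌋₊ < q := (Nat.floor_lt' (by omega)).2
    (mul_lt_of_lt_one_left (by exact_mod_cast d.zero_le.trans_lt hd) hz.2)
  rw [qdigit, zero_add, pow_one, Int.floor_toNat, Nat.mod_eq_of_lt hfloor,
    ← Int.natCast_floor_eq_floor (mul_nonneg hz.1 q.cast_nonneg), Nat.cast_inj]

theorem floor_eq_and_fract_mem_Ico_iff {a b : ℝ} (ha : 0 ≤ a) (hb : b ≤ 1) (u : ℝ) (k : ℤ) :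
    ⌊u⌋ = k ∧ Int.fract u ∈ Set.Ico a b ↔ u ∈ Set.Ico (k + a) (k + b) := by
  constructor
  · rintro ⟨rfl, h⟩
    constructor <;> linarith [h.1, h.2, Int.self_sub_floor u]
  · intro h
    have hk : ⌊u⌋ = k := Int.floor_eq_iff.2 ⟨by linarith [h.1], by linarith [h.2]⟩
    refine ⟨hk, ?_, ?_⟩ <;> rw [← Int.self_sub_floor, hk] <;> linarith [h.1, h.2]

theorem exists_forall_qdigit_eq_iff_mem_Ico (p : ℕ) {m : ℕ} (d : Fin m → ℕ) (hd : ∀ i, d i < p) :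
    ∃ D : ℕ, D + 1 ≤ p ^ m ∧ ∀ z ∈ Set.Ico (0 : ℝ) 1,
      ((∀ i : Fin m, qdigit p z i = d i) ↔
        z ∈ Set.Ico ((D : ℝ) / (p : ℝ) ^ m) ((D + 1) / (p : ℝ) ^ m)) := by
  induction m with
  | zero => exact ⟨0, by simp, fun z hz => by simpa using hz⟩
  | succ m ih =>
    obtain ⟨D, hD, h⟩ := ih (fun i => d i.succ) fun i => hd i.succ
    have hp : 0 < p := (Nat.zero_le _).trans_lt (hd 0)
    refine ⟨d 0 * p ^ m + D, ?_, fun z hz => ?_⟩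
    · calc d 0 * p ^ m + D + 1 ≤ d 0 * p ^ m + p ^ m := by omega
        _ = (d 0 + 1) * p ^ m := by ring
        _ ≤ p * p ^ m := Nat.mul_le_mul_right _ (hd 0)
        _ = p ^ (m + 1) := (pow_succ' p m).symm
    have hshift (i : Fin m) :
        qdigit p z (i.succ : Fin (m + 1)) = qdigit p (Int.fract (z * p)) i := by
      rw [Fin.val_succ, add_comm, qdigit_add p hz.1, pow_one]
    have hp' : (0 : ℝ) < p := by exact_mod_cast hp
    have hD1 : ((D : ℝ) + 1) / (p : ℝ) ^ m ≤ 1 := by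
      rw [div_le_one (by positivity)]
      exact_mod_cast hD
    have hscale (E : ℝ) : (d 0 * (p : ℝ) ^ m + E) / (p : ℝ) ^ (m + 1) =
        (d 0 + E / (p : ℝ) ^ m) / p := by
      rw [pow_succ, ← div_div, add_div, mul_div_cancel_right₀ _ (by positivity)]
    simp only [Fin.forall_fin_succ, hshift, h _ ⟨Int.fract_nonneg _, Int.fract_lt_one _⟩,
      Fin.val_zero]
    rw [qdigit_zero_eq_iff (hd 0) hz, floor_eq_and_fract_mem_Ico_iff (by positivity) hD1]
    push_cast
    rw [add_assoc, hscale, hscale, Set.mem_Ico, Set.mem_Ico, div_le_iff₀ hp', lt_div_iff₀ hp']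

theorem isNormal_of_equidistributedAlong {p : ℕ} {x : ℝ} (hx : 0 ≤ x)
    (h : EquidistributedAlong atTop Finset.range fun n => ((x * (p : ℝ) ^ n : ℝ) : UnitAddCircle)) :
    IsNormal p x := by
  intro m _ d hd
  obtain ⟨D, hD, hiff⟩ := exists_forall_qdigit_eq_iff_mem_Ico p d hd
  have hp : (0 : ℝ) < (p : ℝ) ^ m := by exact_mod_cast hD.trans_lt' D.succ_pos
  have hD1 : ((D : ℝ) + 1) / (p : ℝ) ^ m ≤ 1 := by
    rw [div_le_one hp]
    exact_mod_cast hD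
  have hword (n : ℕ) : (∀ i : Fin m, qdigit p x (n + i) = d i) ↔
      Int.fract (x * (p : ℝ) ^ n) ∈ Set.Ico ((D : ℝ) / (p : ℝ) ^ m) ((D + 1) / (p : ℝ) ^ m) := by
    simp only [qdigit_add p hx, hiff _ ⟨Int.fract_nonneg _, Int.fract_lt_one _⟩]
  have hlen : ((D : ℝ) + 1) / (p : ℝ) ^ m - D / (p : ℝ) ^ m = ((p : ℝ) ^ m)⁻¹ := by ring
  simp only [hword, ← hlen]
  exact h.tendsto_card_filter_fract_mem_Ico_div (by positivity) (by gcongr; simp) hD1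

end Digits

section Cosine

theorem sum_range_cos_sq {Q : ℕ} (hQ : 2 ≤ Q) (w : ℝ) :
    ∑ j ∈ Finset.range Q, Real.cos (Real.pi * ((w + j) / Q)) ^ 2 = Q / 2 := by
  have hroot : ∑ j ∈ Finset.range Q, Real.cos (2 * (Real.pi * ((w + j) / Q))) = 0 := by
    have hre (j : ℕ) : Real.cos (2 * (Real.pi * ((w + j) / Q))) =
        (Complex.exp (2 * Real.pi * Complex.I * w / Q) *
          Complex.exp (2 * Real.pi * Complex.I / Q) ^ j).re := by
      rw [← Complex.exp_nat_mul, ← Complex.exp_add, ← Complex.exp_ofReal_mul_I_re]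
      congr 2
      push_cast
      ring
    simp only [hre]
    rw [← Complex.re_sum, ← Finset.mul_sum,
      (Complex.isPrimitiveRoot_exp Q (by omega)).geom_sum_eq_zero (by omega), mul_zero,
      Complex.zero_re]
  simp only [Real.cos_sq, Finset.sum_add_distrib, ← Finset.sum_div, hroot]
  simp [div_eq_mul_inv]

theorem sum_range_abs_cos_le {Q : ℕ} (hQ : 2 ≤ Q) (w : ℝ) :
    ∑ j ∈ Finset.range Q, |Real.cos (Real.pi * ((w + j) / Q))| ≤ 3 / 4 * Q := by
  have amgm (c : ℝ) : |c| ≤ (1 + c ^ 2) / 2 := by nlinarith [sq_nonneg (|c| - 1), sq_abs c]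
  calc ∑ j ∈ Finset.range Q, |Real.cos (Real.pi * ((w + j) / Q))|
      ≤ ∑ j ∈ Finset.range Q, (1 + Real.cos (Real.pi * ((w + j) / Q)) ^ 2) / 2 :=
        Finset.sum_le_sum fun j _ => amgm _
    _ = 3 / 4 * Q := by
        rw [← Finset.sum_div, Finset.sum_add_distrib, sum_range_cos_sq hQ]
        simp
        ring

/-- The product of `|cos (π Qⁱ v)|` over `i < D`. It is the modulus of the characteristic function,
at frequency `v`, of a sum of `D` independent random bits weighted by consecutive powers of `Q`. -/
noncomputable def cosProd (Q D : ℕ) (v : ℝ) : ℝ :=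
  ∏ i ∈ Finset.range D, |Real.cos (Real.pi * ((Q : ℝ) ^ i * v))|

theorem cosProd_nonneg (Q D : ℕ) (v : ℝ) : 0 ≤ cosProd Q D v :=
  Finset.prod_nonneg fun _ _ => abs_nonneg _

theorem continuous_cosProd (Q D : ℕ) : Continuous (cosProd Q D) := by
  unfold cosProd
  fun_prop

theorem cosProd_succ (Q D : ℕ) (v : ℝ) :
    cosProd Q (D + 1) v = |Real.cos (Real.pi * v)| * cosProd Q D (Q * v) := by
  simp only [cosProd, Finset.prod_range_succ', pow_zero, one_mul, pow_succ, mul_assoc]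
  exact mul_comm _ _

theorem periodic_cosProd (Q D : ℕ) : Function.Periodic (cosProd Q D) 1 := by
  intro v
  refine Finset.prod_congr rfl fun i _ => ?_
  have h : Real.pi * ((Q : ℝ) ^ i * (v + 1)) =
      Real.pi * ((Q : ℝ) ^ i * v) + ((Q ^ i : ℕ) : ℤ) * Real.pi := by
    push_cast
    ring
  rw [h, Real.cos_add_int_mul_pi, abs_mul, abs_neg_one_zpow, one_mul]

theorem integral_comp_natCast_mul {Q : ℕ} (hQ : 0 < Q) {g : ℝ → ℝ}
    (hg : Continuous g) :
    ∫ v in (0 : ℝ)..1, g (Q * v) =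
      (Q : ℝ)⁻¹ * ∫ w in (0 : ℝ)..1, ∑ j ∈ Finset.range Q, g (w + j) := by
  have hQ' : (Q : ℝ) ≠ 0 := by positivity
  rw [intervalIntegral.integral_comp_mul_left _ hQ', smul_eq_mul, mul_zero, mul_one,
    intervalIntegral.integral_finsetSum fun j _ =>
      (by fun_prop : Continuous _).intervalIntegrable ..]
  congr 1
  have := intervalIntegral.sum_integral_adjacent_intervals (a := fun j : ℕ => (j : ℝ)) (n := Q)
    (f := g) (μ := volume) fun k _ => hg.intervalIntegrable _ _
  rw [Nat.cast_zero] at this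
  rw [← this]
  refine Finset.sum_congr rfl fun j _ => ?_
  rw [intervalIntegral.integral_comp_add_right, zero_add, Nat.cast_succ, add_comm (1 : ℝ)]

theorem integral_cosProd_le {Q : ℕ} (hQ : 2 ≤ Q) (D : ℕ) :
    ∫ v in (0 : ℝ)..1, cosProd Q D v ≤ (3 / 4) ^ D := by
  induction D with
  | zero => simp [cosProd]
  | succ D ih =>
    have hQ' : (Q : ℝ) ≠ 0 := by positivity
    have hcont := continuous_cosProd Q D
    have hper (w : ℝ) (j : ℕ) : cosProd Q D (w + j) = cosProd Q D w := by
      simpa using (periodic_cosProd Q D).nat_mul j w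
    let g (w : ℝ) : ℝ := |Real.cos (Real.pi * (w / Q))| * cosProd Q D w
    calc ∫ v in (0 : ℝ)..1, cosProd Q (D + 1) v = ∫ v in (0 : ℝ)..1, g (Q * v) := by
          simp only [g, cosProd_succ, mul_div_cancel_left₀ _ hQ']
      _ = (Q : ℝ)⁻¹ * ∫ w in (0 : ℝ)..1, ∑ j ∈ Finset.range Q, g (w + j) :=
          integral_comp_natCast_mul (by omega) (by fun_prop)
      _ ≤ (Q : ℝ)⁻¹ * ∫ w in (0 : ℝ)..1, 3 / 4 * Q * cosProd Q D w := by
          gcongr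
          refine intervalIntegral.integral_mono_on zero_le_one
            ((by fun_prop : Continuous _).intervalIntegrable ..)
            ((by fun_prop : Continuous _).intervalIntegrable ..) fun w _ => ?_
          simp only [g, hper, ← Finset.sum_mul]
          exact mul_le_mul_of_nonneg_right (sum_range_abs_cos_le hQ w) (cosProd_nonneg ..)
      _ = 3 / 4 * ∫ w in (0 : ℝ)..1, cosProd Q D w := by
          rw [intervalIntegral.integral_const_mul]
          field_simp
      _ ≤ (3 / 4) ^ (D + 1) := by
          rw [pow_succ']
          gcongr

end Cosine

section Mantissa

theorem integral_eq_natCast_mul_of_periodic {f : ℝ → ℝ} (hf : Continuous f)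
    (hper : Function.Periodic f 1) (a k : ℕ) :
    ∫ v in (a : ℝ)..(a + k : ℕ), f v = k * ∫ v in (0 : ℝ)..1, f v := by
  have h := hper.intervalIntegral_add_zsmul_eq k (a : ℝ) fun _ _ => hf.intervalIntegrable _ _
  rw [hper.intervalIntegral_add_eq (a : ℝ) 0, zero_add] at h
  simpa using h

theorem integral_comp_mul_rpow_le {Q h : ℕ} (hQ : 2 ≤ Q) (hh : 0 < h) {f : ℝ → ℝ}
    (hf : Continuous f) (hper : Function.Periodic f 1) (hf0 : ∀ v, 0 ≤ f v) :
    ∫ y in (0 : ℝ)..1, f (h * (Q : ℝ) ^ y) ≤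
      (Q - 1) / Real.log Q * ∫ v in (0 : ℝ)..1, f v := by
  have hQ1 : (1 : ℝ) < Q := by exact_mod_cast hQ
  have hlog : 0 < Real.log Q := Real.log_pos hQ1
  have hh' : (0 : ℝ) < h := by exact_mod_cast hh
  have hcont : Continuous fun y : ℝ => (Q : ℝ) ^ y := Real.continuous_const_rpow (by positivity)
  have hderiv (y : ℝ) : HasDerivAt (fun y : ℝ => (h : ℝ) * (Q : ℝ) ^ y)
      (h * ((Q : ℝ) ^ y * Real.log Q)) y :=
    (Real.hasStrictDerivAt_const_rpow (by positivity) y).hasDerivAt.const_mul _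
  have hpoint (y : ℝ) (hy : y ∈ Set.Icc (0 : ℝ) 1) : h * Real.log Q * f (h * (Q : ℝ) ^ y) ≤
      f (h * (Q : ℝ) ^ y) * (h * ((Q : ℝ) ^ y * Real.log Q)) := by
    calc h * Real.log Q * f (h * (Q : ℝ) ^ y)
        ≤ h * Real.log Q * f (h * (Q : ℝ) ^ y) * (Q : ℝ) ^ y :=
          le_mul_of_one_le_right (mul_nonneg (by positivity) (hf0 _))
            (Real.one_le_rpow hQ1.le hy.1)
      _ = f (h * (Q : ℝ) ^ y) * (h * ((Q : ℝ) ^ y * Real.log Q)) := by ring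
  have hend : h + h * (Q - 1) = h * Q := by
    rw [← mul_one_add, Nat.add_sub_cancel' (by omega)]
  rw [div_mul_eq_mul_div, le_div_iff₀' hlog]
  refine le_of_mul_le_mul_left ?_ hh'
  calc h * (Real.log Q * ∫ y in (0 : ℝ)..1, f (h * (Q : ℝ) ^ y))
      = ∫ y in (0 : ℝ)..1, h * Real.log Q * f (h * (Q : ℝ) ^ y) := by
        rw [intervalIntegral.integral_const_mul, mul_assoc]
    _ ≤ ∫ y in (0 : ℝ)..1, f (h * (Q : ℝ) ^ y) * (h * ((Q : ℝ) ^ y * Real.log Q)) :=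
        intervalIntegral.integral_mono_on zero_le_one
          ((by fun_prop : Continuous _).intervalIntegrable ..)
          ((by fun_prop : Continuous _).intervalIntegrable ..) hpoint
    _ = ∫ v in (h : ℝ)..(h + h * (Q - 1) : ℕ), f v := by
        rw [hend]
        simpa using intervalIntegral.integral_comp_mul_deriv (a := 0) (b := 1) (g := f)
          (fun y _ => hderiv y) (by fun_prop) hf
    _ = h * ((Q - 1) * ∫ v in (0 : ℝ)..1, f v) := by
        rw [integral_eq_natCast_mul_of_periodic hf hper, Nat.cast_mul, Nat.cast_pred (by omega),
          mul_assoc]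

theorem not_isOfFinAddOrder_logb {p Q : ℕ} (hp : 2 ≤ p) (hQ : 2 ≤ Q)
    (hpQ : ∀ r s : ℕ, 0 < r → 0 < s → p ^ r ≠ Q ^ s) :
    ¬IsOfFinAddOrder ((Real.logb Q p : ℝ) : UnitAddCircle) := by
  intro h
  obtain ⟨n, hn, hn0⟩ := isOfFinAddOrder_iff_nsmul_eq_zero.1 h
  rw [← AddCircle.coe_nsmul, AddCircle.coe_eq_zero_iff] at hn0
  obtain ⟨m, hm⟩ := hn0
  rw [zsmul_one, nsmul_eq_mul] at hm
  have hQ1 : (1 : ℝ) < Q := by exact_mod_cast hQ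
  have hp1 : (1 : ℝ) < p := by exact_mod_cast hp
  have hm0 : 0 < m := by
    have := mul_pos (Nat.cast_pos.2 hn) (Real.logb_pos hQ1 hp1)
    rw [← hm] at this
    exact_mod_cast this
  lift m to ℕ using hm0.le
  refine hpQ n m hn (by omega) ?_
  rw [Int.cast_natCast, ← Real.logb_pow, eq_comm, Real.logb_eq_iff_rpow_eq (by positivity) hQ1.ne'
    (by positivity), Real.rpow_natCast] at hm
  exact_mod_cast hm.symm

theorem pow_div_pow_log_eq_rpow_fract {p Q : ℕ} (hp : 0 < p) (hQ : 2 ≤ Q) (n : ℕ) :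
    (p : ℝ) ^ n / (Q : ℝ) ^ Nat.log Q (p ^ n) = (Q : ℝ) ^ Int.fract (n * Real.logb Q p) := by
  have hQ1 : (1 : ℝ) < Q := by exact_mod_cast hQ
  have hfloor : ⌊n * Real.logb Q p⌋ = (Nat.log Q (p ^ n) : ℤ) := by
    rw [← Real.logb_pow, ← Nat.cast_pow, Real.floor_logb_natCast (Nat.cast_nonneg _),
      Int.log_natCast]
  rw [← Int.self_sub_floor, hfloor, Real.rpow_sub (by positivity), Int.cast_natCast,
    Real.rpow_natCast, mul_comm, Real.rpow_mul (by positivity),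
    Real.rpow_logb (by positivity) hQ1.ne' (by positivity), Real.rpow_natCast]

theorem tendsto_expect_comp_mul_pow_div_pow_log {ι : Type*} {l : Filter ι} {p Q : ℕ} (hp : 2 ≤ p)
    (hQ : 2 ≤ Q) (hpQ : ∀ r s : ℕ, 0 < r → 0 < s → p ^ r ≠ Q ^ s) {f : ℝ → ℝ} (hf : Continuous f)
    (hper : Function.Periodic f 1) (h : ℕ) (M : ι → ℕ) {L : ι → ℕ} (hL : Tendsto L l atTop) :
    Tendsto (fun i => 𝔼 n ∈ Finset.Ico (M i) (M i + L i),
      f (h * ((p : ℝ) ^ n / (Q : ℝ) ^ Nat.log Q (p ^ n)))) l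
      (𝓝 (∫ y in (0 : ℝ)..1, f (h * (Q : ℝ) ^ y))) := by
  have hequi := equidistributedAlong_Ico_nsmul (not_isOfFinAddOrder_logb hp hQ hpQ) M hL
  simp only [← AddCircle.coe_nsmul, nsmul_eq_mul] at hequi
  have hcont : Continuous fun y : ℝ => (Q : ℝ) ^ y := Real.continuous_const_rpow (by positivity)
  have h01 : f (h * (Q : ℝ) ^ (0 : ℝ)) = f (h * (Q : ℝ) ^ (1 : ℝ)) := by
    simp only [Real.rpow_zero, mul_one, Real.rpow_one, ← Nat.cast_mul]
    simpa using (hper.nat_mul_eq h).trans (hper.nat_mul_eq (h * Q)).symm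
  simpa only [pow_div_pow_log_eq_rpow_fract (by omega : 0 < p) hQ] using
    hequi.tendsto_expect_comp_fract (g := fun y => f (h * (Q : ℝ) ^ y)) (by fun_prop) h01

end Mantissa

section ExponentialSums

variable {ι κ : Type*}

theorem norm_one_add_fourierChar (t : ℝ) : ‖1 + (𝐞 t : ℂ)‖ = 2 * |Real.cos (Real.pi * t)| := by
  have hfactor : 1 + (𝐞 t : ℂ) = (𝐞 (t / 2) : ℂ) * (2 * Complex.cos (Real.pi * t)) := by
    rw [Complex.two_cos, mul_add, Real.fourierChar_apply, Real.fourierChar_apply,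
      ← Complex.exp_add, ← Complex.exp_add, ← Complex.exp_zero, add_comm]
    push_cast
    congr 2 <;> ring
  rw [hfactor, norm_mul, Circle.norm_coe, one_mul, norm_mul, ← Complex.ofReal_mul,
    ← Complex.ofReal_cos, Complex.norm_real, Complex.norm_two, Real.norm_eq_abs]

theorem norm_fourierChar_sub_le (s t : ℝ) : ‖(𝐞 s : ℂ) - 𝐞 t‖ ≤ 2 * Real.pi * |s - t| := by
  have hfactor : (𝐞 s : ℂ) - 𝐞 t =
      𝐞 t * (Complex.exp (Complex.I * (2 * Real.pi * (s - t) : ℝ)) - 1) := by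
    rw [mul_sub_one, Real.fourierChar_apply, Real.fourierChar_apply, ← Complex.exp_add]
    push_cast
    congr 2
    ring
  rw [hfactor, norm_mul, Circle.norm_coe, one_mul]
  refine Real.norm_exp_I_mul_ofReal_sub_one_le.trans_eq ?_
  rw [Real.norm_eq_abs, abs_mul, abs_of_pos Real.two_pi_pos]

theorem norm_expect_powerset_fourierChar_sum (s : Finset κ) (t : κ → ℝ) :
    ‖𝔼 S ∈ s.powerset, (𝐞 (∑ k ∈ S, t k) : ℂ)‖ = ∏ k ∈ s, |Real.cos (Real.pi * t k)| := by
  have hprod (S : Finset κ) : (𝐞 (∑ k ∈ S, t k) : ℂ) = ∏ k ∈ S, (𝐞 (t k) : ℂ) := by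
    simp only [Real.fourierChar_apply, ← Complex.exp_sum, ← Finset.sum_mul, ← Finset.mul_sum,
      ← Complex.ofReal_sum]
  simp only [hprod]
  rw [Finset.expect_eq_sum_div_card, ← Finset.prod_one_add, norm_div, norm_prod,
    Finset.card_powerset, Nat.cast_pow, norm_pow, Nat.cast_ofNat, Complex.norm_two,
    Finset.prod_congr rfl fun k _ => norm_one_add_fourierChar (t k), Finset.prod_mul_distrib,
    Finset.prod_const, mul_div_cancel_left₀ _ (by positivity)]

theorem expect_norm_expect_sq_le (A : Finset κ) (I : Finset ι) (E : κ → ι → ℂ) :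
    𝔼 S ∈ A, ‖𝔼 n ∈ I, E S n‖ ^ 2 ≤
      𝔼 n ∈ I, 𝔼 m ∈ I, ‖𝔼 S ∈ A, E S n * starRingEnd ℂ (E S m)‖ := by
  have hsq (S : κ) : ((‖𝔼 n ∈ I, E S n‖ ^ 2 : ℝ) : ℂ) =
      𝔼 n ∈ I, 𝔼 m ∈ I, E S n * starRingEnd ℂ (E S m) := by
    rw [Complex.ofReal_pow, ← Complex.mul_conj', ← Finset.expect_mul_expect]
    simp [Finset.expect_eq_sum_div_card]
  have hswap : ((𝔼 S ∈ A, ‖𝔼 n ∈ I, E S n‖ ^ 2 : ℝ) : ℂ) =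
      𝔼 n ∈ I, 𝔼 m ∈ I, 𝔼 S ∈ A, E S n * starRingEnd ℂ (E S m) := by
    rw [Complex.ofReal_expect]
    simp only [hsq]
    rw [Finset.expect_comm]
    exact Finset.expect_congr rfl fun n _ => Finset.expect_comm ..
  calc 𝔼 S ∈ A, ‖𝔼 n ∈ I, E S n‖ ^ 2
      ≤ ‖((𝔼 S ∈ A, ‖𝔼 n ∈ I, E S n‖ ^ 2 : ℝ) : ℂ)‖ := by
        rw [Complex.norm_real]
        exact le_abs_self _
    _ ≤ _ := by
        rw [hswap]
        exact (RCLike.norm_expect_le (K := ℂ)).trans <|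
          Finset.expect_le_expect fun n _ => RCLike.norm_expect_le (K := ℂ)

theorem expect_norm_expect_fourierChar_sq_le (s : Finset κ) (c : κ → ℝ) (I : Finset ι)
    (g : ι → ℝ) (x : ℝ) :
    𝔼 S ∈ s.powerset, ‖𝔼 n ∈ I, (𝐞 (g n * (x + ∑ k ∈ S, c k)) : ℂ)‖ ^ 2 ≤
      𝔼 n ∈ I, 𝔼 m ∈ I, ∏ k ∈ s, |Real.cos (Real.pi * ((g n - g m) * c k))| := by
  refine (expect_norm_expect_sq_le _ _ _).trans_eq <|
    Finset.expect_congr rfl fun n _ => Finset.expect_congr rfl fun m _ => ?_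
  have hmul (S : Finset κ) : (𝐞 (g n * (x + ∑ k ∈ S, c k)) : ℂ) *
      starRingEnd ℂ (𝐞 (g m * (x + ∑ k ∈ S, c k)) : ℂ) =
      𝐞 ((g n - g m) * x) * (𝐞 (∑ k ∈ S, (g n - g m) * c k) : ℂ) := by
    rw [← Circle.coe_inv_eq_conj, ← AddChar.map_neg_eq_inv, ← Circle.coe_mul, ← Circle.coe_mul,
      ← AddChar.map_add_eq_mul, ← AddChar.map_add_eq_mul, ← Finset.mul_sum]
    congr 2
    ring
  simp only [hmul]
  rw [← Finset.mul_expect, norm_mul, Circle.norm_coe, one_mul,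
    norm_expect_powerset_fourierChar_sum]

end ExponentialSums

section Correlation

theorem cosProd_le_one (Q D : ℕ) (v : ℝ) : cosProd Q D v ≤ 1 :=
  Finset.prod_le_one (fun _ _ => abs_nonneg _) fun _ _ => Real.abs_cos_le_one _

theorem cosProd_le_cosProd_add (Q D : ℕ) (u v : ℝ) :
    cosProd Q D u ≤ cosProd Q D v + Real.pi * (∑ i ∈ Finset.range D, (Q : ℝ) ^ i) * |u - v| := by
  induction D generalizing u v with
  | zero => simp [cosProd]
  | succ D ih =>
    have hcos : |Real.cos (Real.pi * u)| ≤ |Real.cos (Real.pi * v)| + Real.pi * |u - v| := by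
      have h := (abs_abs_sub_abs_le _ _).trans (Real.abs_cos_sub_cos_le (Real.pi * u) (Real.pi * v))
      rw [← mul_sub, abs_mul, abs_of_pos Real.pi_pos] at h
      linarith [le_abs_self (|Real.cos (Real.pi * u)| - |Real.cos (Real.pi * v)|)]
    have hmul : |(Q : ℝ) * u - Q * v| = Q * |u - v| := by
      rw [← mul_sub, abs_mul, Nat.abs_cast]
    rw [cosProd_succ, cosProd_succ, geom_sum_succ]
    set E := Real.pi * (∑ i ∈ Finset.range D, (Q : ℝ) ^ i) * |Q * u - Q * v| with hE
    have hEle : |Real.cos (Real.pi * v)| * E ≤ E :=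
      mul_le_of_le_one_left (by positivity) (Real.abs_cos_le_one _)
    calc |Real.cos (Real.pi * u)| * cosProd Q D (Q * u)
        ≤ (|Real.cos (Real.pi * v)| + Real.pi * |u - v|) * cosProd Q D (Q * u) :=
          mul_le_mul_of_nonneg_right hcos (cosProd_nonneg ..)
      _ = |Real.cos (Real.pi * v)| * cosProd Q D (Q * u) +
            Real.pi * |u - v| * cosProd Q D (Q * u) := add_mul ..
      _ ≤ |Real.cos (Real.pi * v)| * (cosProd Q D (Q * v) + E) + Real.pi * |u - v| * 1 := by
          gcongr
          · exact ih _ _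
          · exact cosProd_le_one ..
      _ ≤ |Real.cos (Real.pi * v)| * cosProd Q D (Q * v) + (E + Real.pi * |u - v|) := by
          linarith
      _ = _ := by
          rw [hE, hmul]
          ring

theorem prod_Ico_abs_cos_le_cosProd {Q : ℕ} (hQ : 0 < Q) {a b D K : ℕ} (ha : a + D ≤ K)
    (hb : K ≤ b) (w : ℝ) :
    ∏ k ∈ Finset.Ico a b, |Real.cos (Real.pi * (w * (Q : ℝ)⁻¹ ^ (k + 1)))| ≤
      cosProd Q D (w / (Q : ℝ) ^ K) := by
  have : (Q : ℝ) ≠ 0 := by positivity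
  calc ∏ k ∈ Finset.Ico a b, |Real.cos (Real.pi * (w * (Q : ℝ)⁻¹ ^ (k + 1)))|
      ≤ ∏ k ∈ Finset.Ico (K - D) K, |Real.cos (Real.pi * (w * (Q : ℝ)⁻¹ ^ (k + 1)))| :=
        Finset.prod_le_prod_of_subset_of_le_one (Finset.Ico_subset_Ico (by omega) hb)
          (fun _ _ => abs_nonneg _) fun _ _ _ => Real.abs_cos_le_one _
    _ = cosProd Q D (w / (Q : ℝ) ^ K) := by
        rw [Finset.prod_Ico_eq_prod_range, Nat.sub_sub_self (by omega),
          ← Finset.prod_range_reflect, cosProd]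
        refine Finset.prod_congr rfl fun i hi => ?_
        have hexp : K = (K - D + (D - 1 - i) + 1) + i := by grind
        conv_rhs => rw [hexp]
        rw [pow_add (Q : ℝ), inv_pow]
        field_simp

theorem prod_abs_cos_mul_pow_sub_le {p Q : ℕ} (hp : 2 ≤ p) (hQ : 2 ≤ Q) {a b D m n : ℕ}
    (ha : Q ^ (a + D) ≤ p ^ n) (hb : p ^ n ≤ Q ^ b) (hmn : m ≤ n) (h : ℕ) :
    ∏ k ∈ Finset.Ico a b, |Real.cos (Real.pi * ((h * (p : ℝ) ^ n - h * (p : ℝ) ^ m) *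
        (Q : ℝ)⁻¹ ^ (k + 1)))| ≤
      cosProd Q D (h * ((p : ℝ) ^ n / (Q : ℝ) ^ Nat.log Q (p ^ n))) +
        Real.pi * (∑ i ∈ Finset.range D, (Q : ℝ) ^ i) * (h * Q) * (1 / 2) ^ (n - m) := by
  set K := Nat.log Q (p ^ n)
  have hpow : (p : ℝ) ^ m / (Q : ℝ) ^ K ≤ Q * (1 / 2) ^ (n - m) := by
    have hlog : (p : ℝ) ^ n ≤ Q * (Q : ℝ) ^ K := by
      rw [← pow_succ']
      exact_mod_cast (Nat.lt_pow_succ_log_self (by omega) _).le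
    have h2 : (2 : ℝ) ^ (n - m) ≤ (p : ℝ) ^ (n - m) := by
      gcongr
      exact_mod_cast hp
    rw [one_div, inv_pow, ← div_eq_mul_inv, div_le_div_iff₀ (by positivity) (by positivity)]
    calc (p : ℝ) ^ m * 2 ^ (n - m) ≤ (p : ℝ) ^ m * (p : ℝ) ^ (n - m) := by gcongr
      _ = (p : ℝ) ^ n := by rw [← pow_add, Nat.add_sub_cancel' hmn]
      _ ≤ Q * (Q : ℝ) ^ K := hlog
  have hdiff : |(h * (p : ℝ) ^ n - h * (p : ℝ) ^ m) / (Q : ℝ) ^ K -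
      h * ((p : ℝ) ^ n / (Q : ℝ) ^ K)| ≤ h * Q * (1 / 2) ^ (n - m) := by
    rw [← mul_div_assoc, ← sub_div, sub_sub_cancel_left, neg_div, abs_neg, mul_div_assoc,
      abs_of_nonneg (by positivity), mul_assoc]
    gcongr
  refine (prod_Ico_abs_cos_le_cosProd (by omega)
    (Nat.le_log_of_pow_le (by omega) ha) ?_ _).trans ?_
  · exact (Nat.log_mono_right hb).trans_eq (Nat.log_pow (by omega) b)
  · refine (cosProd_le_cosProd_add _ _ _ (h * ((p : ℝ) ^ n / (Q : ℝ) ^ K))).trans ?_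
    rw [mul_assoc (Real.pi * _) (h * Q : ℝ)]
    gcongr

theorem sum_filter_le_half_pow_sub_le (I : Finset ℕ) (n : ℕ) :
    ∑ m ∈ I with m ≤ n, (1 / 2 : ℝ) ^ (n - m) ≤ 2 :=
  calc ∑ m ∈ I with m ≤ n, (1 / 2 : ℝ) ^ (n - m)
      ≤ ∑ m ∈ Finset.range (n + 1), (1 / 2 : ℝ) ^ (n - m) :=
        Finset.sum_le_sum_of_subset_of_nonneg (fun m hm => by simp at hm ⊢; omega)
          fun _ _ _ => by positivity
    _ = ∑ j ∈ Finset.range (n + 1), (1 / 2 : ℝ) ^ j := Finset.sum_flip fun j => (1 / 2 : ℝ) ^ j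
    _ ≤ 2 := sum_geometric_two_le _

theorem expect_ite_le_half_pow_sub_le (I : Finset ℕ) (n : ℕ) :
    𝔼 m ∈ I, (if m ≤ n then (1 / 2 : ℝ) ^ (n - m) else 0) ≤ 2 / I.card := by
  rw [Finset.expect_eq_sum_div_card, ← Finset.sum_filter]
  gcongr
  exact sum_filter_le_half_pow_sub_le I n

theorem expect_expect_le_of_symm {κ : Type*} [LinearOrder κ] {I : Finset κ} {f B : κ → κ → ℝ}
    (hsymm : ∀ n m, f n m = f m n) (hB0 : ∀ n m, 0 ≤ B n m)
    (hB : ∀ n ∈ I, ∀ m ∈ I, m ≤ n → f n m ≤ B n m) :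
    𝔼 n ∈ I, 𝔼 m ∈ I, f n m ≤ 2 * 𝔼 n ∈ I, 𝔼 m ∈ I, if m ≤ n then B n m else 0 := by
  let B' (n m : κ) : ℝ := if m ≤ n then B n m else 0
  have hB'0 (n m : κ) : 0 ≤ B' n m := by
    dsimp only [B']
    split_ifs
    exacts [hB0 n m, le_rfl]
  have hB' {n m : κ} (hn : n ∈ I) (hm : m ∈ I) (hmn : m ≤ n) : f n m ≤ B' n m := by
    simpa only [B', if_pos hmn] using hB n hn m hm hmn
  calc 𝔼 n ∈ I, 𝔼 m ∈ I, f n m ≤ 𝔼 n ∈ I, 𝔼 m ∈ I, (B' n m + B' m n) := by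
        refine Finset.expect_le_expect fun n hn => Finset.expect_le_expect fun m hm => ?_
        rcases le_total m n with hmn | hnm
        · exact (hB' hn hm hmn).trans (le_add_of_nonneg_right (hB'0 m n))
        · exact (hsymm n m).trans_le <|
            (hB' hm hn hnm).trans (le_add_of_nonneg_left (hB'0 n m))
    _ = 2 * 𝔼 n ∈ I, 𝔼 m ∈ I, B' n m := by
        simp only [Finset.expect_add_distrib]
        rw [Finset.expect_comm I I fun n m => B' m n, two_mul]

theorem expect_expect_le_of_le_add_half_pow {I : Finset ℕ} {f : ℕ → ℕ → ℝ} {A : ℕ → ℝ} {C : ℝ}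
    (hsymm : ∀ n m, f n m = f m n) (hA : ∀ n, 0 ≤ A n) (hC : 0 ≤ C)
    (hf : ∀ n ∈ I, ∀ m ∈ I, m ≤ n → f n m ≤ A n + C * (1 / 2) ^ (n - m)) :
    𝔼 n ∈ I, 𝔼 m ∈ I, f n m ≤ 2 * (𝔼 n ∈ I, A n + 2 * C / I.card) := by
  rcases I.eq_empty_or_nonempty with rfl | hI
  · simp
  have hinner (n : ℕ) : (𝔼 m ∈ I, if m ≤ n then A n + C * (1 / 2) ^ (n - m) else 0) ≤
      A n + C * (2 / I.card) :=
    calc (𝔼 m ∈ I, if m ≤ n then A n + C * (1 / 2) ^ (n - m) else 0)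
        ≤ 𝔼 m ∈ I, (A n + C * if m ≤ n then (1 / 2 : ℝ) ^ (n - m) else 0) :=
          Finset.expect_le_expect fun m _ => by split_ifs <;> linarith [hA n]
      _ ≤ A n + C * (2 / I.card) := by
          rw [Finset.expect_add_distrib, Finset.expect_const hI, ← Finset.mul_expect]
          gcongr
          exact expect_ite_le_half_pow_sub_le I n
  refine (expect_expect_le_of_symm hsymm (fun n m => ?_) hf).trans ?_
  · have := hA n
    positivity
  · gcongr
    refine (Finset.expect_le_expect fun n _ => hinner n).trans_eq ?_
    rw [Finset.expect_add_distrib, Finset.expect_const hI]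
    ring

theorem expect_Ico_boole_lt_le (M L T : ℕ) :
    (𝔼 n ∈ Finset.Ico M (M + L), if n < M + T then (1 : ℝ) else 0) ≤ T / L := by
  rw [Finset.expect_eq_sum_div_card, Nat.card_Ico, Nat.add_sub_cancel_left, Finset.sum_boole]
  gcongr
  calc ((Finset.Ico M (M + L)).filter fun n => n < M + T).card ≤ (Finset.Ico M (M + T)).card :=
        Finset.card_le_card fun n hn => by simp at hn ⊢; omega
    _ = T := by simp

theorem expect_expect_Ico_le {f : ℕ → ℕ → ℝ} {A : ℕ → ℝ} {C : ℝ} {M L T : ℕ}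
    (hsymm : ∀ n m, f n m = f m n) (hf1 : ∀ n m, f n m ≤ 1) (hA : ∀ n, 0 ≤ A n) (hC : 0 ≤ C)
    (hf : ∀ n ∈ Finset.Ico (M + T) (M + L), ∀ m ≤ n, f n m ≤ A n + C * (1 / 2) ^ (n - m)) :
    𝔼 n ∈ Finset.Ico M (M + L), 𝔼 m ∈ Finset.Ico M (M + L), f n m ≤
      2 * (𝔼 n ∈ Finset.Ico M (M + L), A n + (2 * C + T) / L) := by
  have hbound : ∀ n ∈ Finset.Ico M (M + L), ∀ m ∈ Finset.Ico M (M + L), m ≤ n →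
      f n m ≤ A n + (if n < M + T then 1 else 0) + C * (1 / 2) ^ (n - m) := by
    intro n hn m _ hmn
    have hC' : 0 ≤ C * (1 / 2 : ℝ) ^ (n - m) := by positivity
    split_ifs with hT
    · linarith [hf1 n m, hA n]
    · simpa using hf n (Finset.mem_Ico.2 ⟨not_lt.1 hT, (Finset.mem_Ico.1 hn).2⟩) m hmn
  refine (expect_expect_le_of_le_add_half_pow hsymm (fun n => ?_) hC hbound).trans ?_
  · have := hA n
    positivity
  · rw [Finset.expect_add_distrib, Nat.card_Ico, Nat.add_sub_cancel_left, add_div, add_assoc,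
      add_comm (2 * C / (L : ℝ))]
    gcongr
    exact expect_Ico_boole_lt_le M L T

/-- The average over `n, m ∈ I` of the modulus of the correlation of `𝐞 (h pⁿ x)` with
`𝐞 (h pᵐ x)`, where the base-`Q` digits of `x` at the positions `s` are independent random bits. -/
noncomputable def meanCorrelation (p Q h : ℕ) (I s : Finset ℕ) : ℝ :=
  𝔼 n ∈ I, 𝔼 m ∈ I, ∏ k ∈ s,
    |Real.cos (Real.pi * ((h * (p : ℝ) ^ n - h * (p : ℝ) ^ m) * (Q : ℝ)⁻¹ ^ (k + 1)))|

theorem meanCorrelation_nonneg (p Q h : ℕ) (I s : Finset ℕ) : 0 ≤ meanCorrelation p Q h I s :=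
  Finset.expect_nonneg fun _ _ => Finset.expect_nonneg fun _ _ =>
    Finset.prod_nonneg fun _ _ => abs_nonneg _

theorem meanCorrelation_le {p Q : ℕ} (hp : 2 ≤ p) (hQ : 2 ≤ Q) {M L a b c : ℕ}
    (ha : Q ^ a ≤ c * p ^ M) (hb : p ^ (M + L) ≤ Q ^ b) (h D : ℕ) :
    meanCorrelation p Q h (Finset.Ico M (M + L)) (Finset.Ico a b) ≤
      2 * (𝔼 n ∈ Finset.Ico M (M + L),
          cosProd Q D (h * ((p : ℝ) ^ n / (Q : ℝ) ^ Nat.log Q (p ^ n))) +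
        (2 * (Real.pi * (∑ i ∈ Finset.range D, (Q : ℝ) ^ i) * (h * Q)) +
          (c * Q ^ D : ℕ)) / L) := by
  refine expect_expect_Ico_le (fun n m => ?_) (fun n m => ?_) (fun n => cosProd_nonneg ..)
    (by positivity) fun n hn m hmn => ?_
  · refine Finset.prod_congr rfl fun k _ => ?_
    rw [← Real.cos_neg]
    congr 2
    ring
  · exact Finset.prod_le_one (fun _ _ => abs_nonneg _) fun _ _ => Real.abs_cos_le_one _
  · rw [Finset.mem_Ico] at hn
    refine prod_abs_cos_mul_pow_sub_le hp hQ ?_ ?_ hmn h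
    · calc Q ^ (a + D) = Q ^ a * Q ^ D := pow_add ..
        _ ≤ c * p ^ M * Q ^ D := Nat.mul_le_mul_right _ ha
        _ = p ^ M * (c * Q ^ D) := by ring
        _ ≤ p ^ M * p ^ (c * Q ^ D) := Nat.mul_le_mul_left _ (Nat.lt_pow_self hp).le
        _ = p ^ (M + c * Q ^ D) := (pow_add ..).symm
        _ ≤ p ^ n := Nat.pow_le_pow_right (by omega) hn.1
    · exact (Nat.pow_le_pow_right (by omega) hn.2.le).trans hb

theorem tendsto_meanCorrelation {ι : Type*} {l : Filter ι} {p Q h : ℕ} (hp : 2 ≤ p) (hQ : 2 ≤ Q)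
    (hpQ : ∀ r s : ℕ, 0 < r → 0 < s → p ^ r ≠ Q ^ s) (hh : 0 < h) {M L a b : ι → ℕ}
    (hL : Tendsto L l atTop) {c : ℕ} (ha : ∀ i, Q ^ a i ≤ c * p ^ M i)
    (hb : ∀ i, p ^ (M i + L i) ≤ Q ^ b i) :
    Tendsto (fun i => meanCorrelation p Q h (Finset.Ico (M i) (M i + L i))
      (Finset.Ico (a i) (b i))) l (𝓝 0) := by
  refine tendsto_order.2 ⟨fun ε hε => .of_forall fun i =>
    hε.trans_le (meanCorrelation_nonneg ..), fun ε hε => ?_⟩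
  obtain ⟨D, hD⟩ : ∃ D : ℕ, 2 * ((Q - 1) / Real.log Q * (3 / 4) ^ D) < ε := by
    have hpow : Tendsto (fun D : ℕ => 2 * ((Q - 1) / Real.log Q * (3 / 4 : ℝ) ^ D)) atTop
        (𝓝 (2 * ((Q - 1) / Real.log Q * 0))) :=
      ((tendsto_pow_atTop_nhds_zero_of_lt_one (by norm_num) (by norm_num)).const_mul _).const_mul _
    simp only [mul_zero] at hpow
    exact (hpow.eventually_lt_const hε).exists
  have hint : ∫ y in (0 : ℝ)..1, cosProd Q D (h * (Q : ℝ) ^ y) ≤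
      (Q - 1) / Real.log Q * (3 / 4) ^ D := by
    have hQ1 : (1 : ℝ) < Q := by exact_mod_cast hQ
    refine (integral_comp_mul_rpow_le hQ hh (continuous_cosProd Q D) (periodic_cosProd Q D)
      (cosProd_nonneg Q D)).trans ?_
    have : 0 ≤ (Q - 1) / Real.log Q := div_nonneg (by linarith) (Real.log_pos hQ1).le
    gcongr
    exact integral_cosProd_le hQ D
  have hlim := ((tendsto_expect_comp_mul_pow_div_pow_log hp hQ hpQ (continuous_cosProd Q D)
    (periodic_cosProd Q D) h M hL).add <| (tendsto_const_div_atTop_nhds_zero_nat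
      (2 * (Real.pi * (∑ i ∈ Finset.range D, (Q : ℝ) ^ i) * (h * Q)) + (c * Q ^ D : ℕ))).comp
        hL).const_mul 2
  rw [add_zero] at hlim
  have hlt := (mul_le_mul_of_nonneg_left hint zero_le_two).trans_lt hD
  filter_upwards [hlim.eventually_lt_const hlt] with i hi
  exact (meanCorrelation_le hp hQ (ha i) (hb i) h D).trans_lt hi

end Correlation

section Choice

theorem exists_mem_forall_le_tsum {ι κ : Type*} {A : Finset κ} (hA : A.Nonempty)
    {G : κ → ι → ℝ} {U : ι → ℝ} (hG : ∀ S ∈ A, ∀ i, 0 ≤ G S i) (hU : Summable U)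
    (h : ∀ i, 𝔼 S ∈ A, G S i ≤ U i) : ∃ S ∈ A, ∀ i, G S i ≤ ∑' i, U i := by
  have hsum (i : ι) : ∑ S ∈ A, G S i ≤ A.card * U i := by
    rw [← Finset.card_mul_expect]
    exact mul_le_mul_of_nonneg_left (h i) (Nat.cast_nonneg _)
  have hsummable : ∀ S ∈ A, Summable (G S) := fun S hS =>
    (hU.mul_left (A.card : ℝ)).of_nonneg_of_le (hG S hS) fun i =>
      (Finset.single_le_sum (f := fun S => G S i) (fun S hS => hG S hS i) hS).trans (hsum i)
  obtain ⟨S, hS, hle⟩ : ∃ S ∈ A, ∑' i, G S i ≤ ∑' i, U i := by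
    refine Finset.exists_le_of_sum_le hA ?_
    rw [← Summable.tsum_finsetSum hsummable, Finset.sum_const, nsmul_eq_mul, ← tsum_mul_left]
    exact (summable_sum hsummable).tsum_le_tsum hsum (hU.mul_left _)
  exact ⟨S, hS, fun i => ((hsummable S hS).le_tsum i fun k _ => hG S hS k).trans hle⟩

theorem meanCorrelation_le_one (p Q h : ℕ) (I s : Finset ℕ) : meanCorrelation p Q h I s ≤ 1 := by
  rcases I.eq_empty_or_nonempty with rfl | hI
  · simp [meanCorrelation]
  · exact Finset.expect_le hI fun _ _ => Finset.expect_le hI fun _ _ =>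
      Finset.prod_le_one (fun _ _ => abs_nonneg _) fun _ _ => Real.abs_cos_le_one _

theorem summable_half_pow_mul_meanCorrelation (p Q : ℕ) (I s : Finset ℕ) :
    Summable fun h : ℕ => (1 / 2 : ℝ) ^ h * meanCorrelation p Q (h + 1) I s :=
  summable_geometric_two.of_nonneg_of_le
    (fun h => mul_nonneg (by positivity) (meanCorrelation_nonneg ..))
    fun h => mul_le_of_le_one_right (by positivity) (meanCorrelation_le_one ..)

/-- A weighted sum of the mean correlations over all positive frequencies, which lets one choice of
digits serve all frequencies at once. -/
noncomputable def totalCorrelation (p Q : ℕ) (I s : Finset ℕ) : ℝ :=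
  ∑' h : ℕ, (1 / 2 : ℝ) ^ h * meanCorrelation p Q (h + 1) I s

theorem exists_subset_forall_norm_expect_fourierChar_sq_le (p Q : ℕ) (I s : Finset ℕ) (x : ℝ) :
    ∃ S ⊆ s, ∀ h : ℕ, (1 / 2 : ℝ) ^ h * ‖𝔼 n ∈ I,
        (𝐞 ((h + 1 : ℕ) * (p : ℝ) ^ n * (x + ∑ k ∈ S, (Q : ℝ)⁻¹ ^ (k + 1))) : ℂ)‖ ^ 2 ≤
      totalCorrelation p Q I s := by
  obtain ⟨S, hS, h⟩ := exists_mem_forall_le_tsum (A := s.powerset) ⟨∅, by simp⟩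
    (G := fun S h => (1 / 2 : ℝ) ^ h * ‖𝔼 n ∈ I,
      (𝐞 ((h + 1 : ℕ) * (p : ℝ) ^ n * (x + ∑ k ∈ S, (Q : ℝ)⁻¹ ^ (k + 1))) : ℂ)‖ ^ 2)
    (fun _ _ _ => by positivity) (summable_half_pow_mul_meanCorrelation p Q I s) fun h => by
      rw [← Finset.mul_expect]
      gcongr
      exact expect_norm_expect_fourierChar_sq_le _ _ _ _ _
  exact ⟨S, Finset.mem_powerset.1 hS, h⟩

theorem tendsto_totalCorrelation {ι : Type*} {l : Filter ι} {p Q : ℕ} (hp : 2 ≤ p) (hQ : 2 ≤ Q)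
    (hpQ : ∀ r s : ℕ, 0 < r → 0 < s → p ^ r ≠ Q ^ s) {M L a b : ι → ℕ}
    (hL : Tendsto L l atTop) {c : ℕ} (ha : ∀ i, Q ^ a i ≤ c * p ^ M i)
    (hb : ∀ i, p ^ (M i + L i) ≤ Q ^ b i) :
    Tendsto (fun i => totalCorrelation p Q (Finset.Ico (M i) (M i + L i))
      (Finset.Ico (a i) (b i))) l (𝓝 0) := by
  have h := tendsto_tsum_of_dominated_convergence (β := ℕ)
    (f := fun i h => (1 / 2 : ℝ) ^ h * meanCorrelation p Q (h + 1)
      (Finset.Ico (M i) (M i + L i)) (Finset.Ico (a i) (b i)))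
    (g := fun h => (1 / 2 : ℝ) ^ h * 0) summable_geometric_two
    (fun h => (tendsto_meanCorrelation hp hQ hpQ h.succ_pos hL ha hb).const_mul _)
    (.of_forall fun i h => by
      rw [Real.norm_of_nonneg (mul_nonneg (by positivity) (meanCorrelation_nonneg ..))]
      exact mul_le_of_le_one_right (by positivity) (meanCorrelation_le_one ..))
  simpa only [totalCorrelation, mul_zero, tsum_zero] using h

theorem exists_seq_apply_eq_and_forall {α : Type*} {a : ℕ → ℕ} (ha : StrictMono a)
    {G : ℕ → (ℕ → α) → Prop}
    (hG : ∀ j (ω ω' : ℕ → α), (∀ k < a (j + 1), ω k = ω' k) → G j ω → G j ω')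
    (hex : ∀ j (ω : ℕ → α), ∃ ω', (∀ k ≤ a j, ω' k = ω k) ∧ G j ω') (s : ℕ → α) :
    ∃ ω : ℕ → α, (∀ j, ω (a j) = s j) ∧ ∀ j, G j ω := by
  choose next hnext hGnext using hex
  let u (j : ℕ) : ℕ → α :=
    j.rec (fun _ => s 0) fun j ω => next j (Function.update ω (a j) (s j))
  have hstep {j k : ℕ} (hk : k < a j) : u (j + 1) k = u j k :=
    (hnext j _ k hk.le).trans (Function.update_of_ne hk.ne _ _)
  have hstable {i j k : ℕ} (hij : i ≤ j) (hk : k < a i) : u j k = u i k := by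
    induction j, hij using Nat.le_induction with
    | base => rfl
    | succ j hij ih => exact (hstep (hk.trans_le (ha.monotone hij))).trans ih
  have hlimit {j k : ℕ} (hk : k < a j) : u (k + 1) k = u j k := by
    rcases le_total (k + 1) j with hkj | hjk
    · exact (hstable hkj (ha.le_apply.trans_lt' k.lt_succ_self)).symm
    · exact hstable hjk hk
  refine ⟨fun k => u (k + 1) k, fun j => ?_, fun j => ?_⟩
  · exact (hlimit (ha j.lt_succ_self)).trans <|
      (hnext j _ _ le_rfl).trans (Function.update_self _ _ _)
  · exact hG j _ _ (fun k hk => (hlimit hk).symm) (hGnext j _)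

end Choice

section Bits

variable {Q : ℕ}

/-- The real number whose `k`-th base-`Q` digit, counted from `k = 0`, is `1` or `0` according to
`ω k`. -/
noncomputable def realOfBits (Q : ℕ) (ω : ℕ → Bool) : ℝ :=
  (Q : ℝ)⁻¹ * Cardinal.cantorFunction (Q : ℝ)⁻¹ ω

theorem realOfBits_nonneg (Q : ℕ) (ω : ℕ → Bool) : 0 ≤ realOfBits Q ω :=
  mul_nonneg (by positivity) <| tsum_nonneg fun _ =>
    Cardinal.cantorFunctionAux_nonneg (by positivity)

theorem realOfBits_le (hQ : 2 ≤ Q) (ω : ℕ → Bool) : realOfBits Q ω ≤ ((Q : ℝ) - 1)⁻¹ := by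
  have hQ' : (1 : ℝ) < Q := by exact_mod_cast hQ
  have hc1 : (Q : ℝ)⁻¹ < 1 := inv_lt_one_of_one_lt₀ hQ'
  have hall : Cardinal.cantorFunction (Q : ℝ)⁻¹ (fun _ => true) = (1 - (Q : ℝ)⁻¹)⁻¹ := by
    simp only [Cardinal.cantorFunction, Cardinal.cantorFunctionAux_true,
      tsum_geometric_of_lt_one (by positivity : 0 ≤ (Q : ℝ)⁻¹) hc1]
  calc realOfBits Q ω
      ≤ (Q : ℝ)⁻¹ * Cardinal.cantorFunction (Q : ℝ)⁻¹ (fun _ => true) := by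
        unfold realOfBits
        gcongr
        exact Cardinal.cantorFunction_le (by positivity) hc1 fun _ _ => rfl
    _ = ((Q : ℝ) - 1)⁻¹ := by
        have : (Q : ℝ) - 1 ≠ 0 := by linarith
        rw [hall]
        field_simp

theorem realOfBits_le_one (hQ : 2 ≤ Q) (ω : ℕ → Bool) : realOfBits Q ω ≤ 1 := by
  have hQ' : (2 : ℝ) ≤ Q := by exact_mod_cast hQ
  exact (realOfBits_le hQ ω).trans (inv_le_one_of_one_le₀ (by linarith))

theorem realOfBits_eq_sum_add (hQ : 2 ≤ Q) (ω : ℕ → Bool) (n : ℕ) :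
    realOfBits Q ω = (∑ k ∈ Finset.range n with ω k, (Q : ℝ)⁻¹ ^ (k + 1)) +
      (Q : ℝ)⁻¹ ^ n * realOfBits Q fun k => ω (k + n) := by
  induction n with
  | zero => simp
  | succ n ih =>
    have hshift : realOfBits Q (fun k => ω (k + n)) =
        (if ω n then (Q : ℝ)⁻¹ else 0) + (Q : ℝ)⁻¹ * realOfBits Q fun k => ω (k + (n + 1)) := by
      rw [realOfBits, Cardinal.cantorFunction_succ _ (by positivity)
        (inv_lt_one_of_one_lt₀ (by exact_mod_cast hQ))]
      cases h : ω n <;> simp [realOfBits, h, mul_add, add_assoc, add_comm 1 n]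
    rw [ih, hshift, Finset.sum_filter, Finset.sum_filter, Finset.sum_range_succ]
    split_ifs <;> ring

theorem abs_realOfBits_sub_sum_le (hQ : 2 ≤ Q) (ω : ℕ → Bool) (n : ℕ) :
    |realOfBits Q ω - ∑ k ∈ Finset.range n with ω k, (Q : ℝ)⁻¹ ^ (k + 1)| ≤ ((Q : ℝ) ^ n)⁻¹ := by
  rw [realOfBits_eq_sum_add hQ ω n, add_sub_cancel_left,
    abs_of_nonneg (mul_nonneg (by positivity) (realOfBits_nonneg ..)), ← inv_pow]
  exact mul_le_of_le_one_right (by positivity) (realOfBits_le_one hQ _)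

theorem realOfBits_lt_one (hQ : 3 ≤ Q) (ω : ℕ → Bool) : realOfBits Q ω < 1 := by
  have hQ' : (3 : ℝ) ≤ Q := by exact_mod_cast hQ
  exact (realOfBits_le (by omega) ω).trans_lt (inv_lt_one_of_one_lt₀ (by linarith))

theorem realOfBits_injective (hQ : 3 ≤ Q) : Function.Injective (realOfBits Q) := by
  have hQ' : (3 : ℝ) ≤ Q := by exact_mod_cast hQ
  refine (mul_right_injective₀ (by positivity)).comp
    (Cardinal.cantorFunction_injective (by positivity) ?_)
  rw [one_div]
  exact inv_strictAnti₀ two_pos (by linarith)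

theorem fract_realOfBits_mul_pow (hQ : 3 ≤ Q) (ω : ℕ → Bool) (n : ℕ) :
    Int.fract (realOfBits Q ω * (Q : ℝ) ^ n) = realOfBits Q fun k => ω (k + n) := by
  have hQ0 : (Q : ℝ) ≠ 0 := by positivity
  refine Int.fract_eq_iff.2 ⟨realOfBits_nonneg .., realOfBits_lt_one hQ _,
    ∑ k ∈ Finset.range n with ω k, (Q : ℤ) ^ (n - (k + 1)), ?_⟩
  have hsum : (∑ k ∈ Finset.range n with ω k, (Q : ℝ)⁻¹ ^ (k + 1)) * (Q : ℝ) ^ n =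
      ∑ k ∈ Finset.range n with ω k, (Q : ℝ) ^ (n - (k + 1)) := by
    rw [Finset.sum_mul]
    refine Finset.sum_congr rfl fun k hk => ?_
    rw [pow_sub₀ _ hQ0 (Finset.mem_range.1 (Finset.mem_filter.1 hk).1), inv_pow, mul_comm]
  have hcancel : (Q : ℝ)⁻¹ ^ n * (Q : ℝ) ^ n = 1 := by rw [← mul_pow, inv_mul_cancel₀ hQ0, one_pow]
  push_cast
  rw [realOfBits_eq_sum_add (by omega) ω n, add_mul, hsum, mul_right_comm, hcancel, one_mul,
    add_sub_cancel_right]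

theorem qdigit_realOfBits_pow {q r j : ℕ} (hq : 2 ≤ q) (hj : j + 1 < r) (ω : ℕ → Bool) (i : ℕ) :
    qdigit q (realOfBits (q ^ r) ω) (r * i + j) = 0 := by
  have hpow : q ^ (j + 1) * 2 ≤ q ^ r :=
    (Nat.mul_le_mul_left _ hq).trans_eq (pow_succ ..).symm |>.trans
      (Nat.pow_le_pow_right (by omega) hj)
  have hlt : 2 ≤ q ^ (j + 1) := hq.trans (Nat.le_self_pow j.succ_ne_zero q)
  have hsmall : realOfBits (q ^ r) (fun k => ω (k + i)) * (q : ℝ) ^ (j + 1) < 1 := by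
    have hcast : (q : ℝ) ^ (j + 1) + 1 < (q ^ r : ℕ) := by exact_mod_cast (by omega)
    calc realOfBits (q ^ r) (fun k => ω (k + i)) * (q : ℝ) ^ (j + 1)
        ≤ (((q ^ r : ℕ) : ℝ) - 1)⁻¹ * (q : ℝ) ^ (j + 1) := by
          gcongr
          exact realOfBits_le (by omega) _
      _ < 1 := (inv_mul_lt_one₀ (by linarith [show (0 : ℝ) ≤ (q : ℝ) ^ (j + 1) by positivity])).2
          (by linarith)
  rw [qdigit_add q (realOfBits_nonneg ..), pow_mul, ← Nat.cast_pow,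
    fract_realOfBits_mul_pow (by omega), qdigit,
    Int.floor_eq_zero_iff.2 ⟨mul_nonneg (realOfBits_nonneg ..) (by positivity), hsmall⟩,
    Int.toNat_zero, Nat.zero_mod]

theorem not_isSimplyNormal_realOfBits {q : ℕ} (hq : 2 ≤ q) (ω : ℕ → Bool) :
    ¬ IsSimplyNormal q (realOfBits (q ^ 3) ω) := by
  intro hnormal
  let x := realOfBits (q ^ 3) ω
  have hcount (K : ℕ) : 2 * K ≤ Nat.count (qdigit q x · = 0) (3 * K) := by
    induction K with
    | zero => simp
    | succ K ih =>
      have h0 : qdigit q x (3 * K) = 0 := qdigit_realOfBits_pow hq (j := 0) (by norm_num) ω K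
      have h1 : qdigit q x (3 * K + 1) = 0 := qdigit_realOfBits_pow hq (by norm_num) ω K
      rw [Nat.mul_succ 3 K, Nat.count_succ, Nat.count_succ, Nat.count_succ, if_pos h0, if_pos h1]
      omega
  have hlim : Tendsto (fun K : ℕ => (Nat.count (qdigit q x · = 0) (3 * K) : ℝ) / (3 * K : ℕ)) atTop
      (𝓝 (q : ℝ)⁻¹) := by
    simpa only [Nat.count_eq_card_filter_range, Function.comp_def, id_eq] using
      (hnormal 0 (by omega)).comp (tendsto_id.const_mul_atTop' (by norm_num : 0 < 3))
  have hle : (2 / 3 : ℝ) ≤ (q : ℝ)⁻¹ := by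
    refine ge_of_tendsto hlim ((eventually_gt_atTop 0).mono fun K hK => ?_)
    have : (2 * K : ℝ) ≤ Nat.count (qdigit q x · = 0) (3 * K) := by exact_mod_cast hcount K
    rw [le_div_iff₀ (by positivity)]
    push_cast
    linarith
  have hq2 : (q : ℝ)⁻¹ ≤ 2⁻¹ := inv_anti₀ two_pos (by exact_mod_cast hq)
  norm_num at hle hq2
  linarith

end Bits

section Blocks

theorem norm_sum_Ico_le {E : Type*} [SeminormedAddCommGroup E] {f : ℕ → E} (hf : ∀ n, ‖f n‖ ≤ 1)
    (a b : ℕ) : ‖∑ n ∈ Finset.Ico a b, f n‖ ≤ (b - a : ℕ) :=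
  (norm_sum_le_of_le _ fun n _ => hf n).trans (by simp)

theorem exists_tendsto_and_mem_Ico {b : ℕ → ℕ} (hb : StrictMono b) (hb0 : b 0 = 0) :
    ∃ j : ℕ → ℕ, Tendsto j atTop atTop ∧ ∀ N, N ∈ Set.Ico (b (j N)) (b (j N + 1)) := by
  have hex (N : ℕ) : ∃ j, N ∈ Set.Ico (b j) (b (j + 1)) := by
    have h : ∃ j, N < b (j + 1) := ⟨N, (N.lt_succ_self).trans_le hb.le_apply⟩
    refine ⟨Nat.find h, ?_, Nat.find_spec h⟩
    rcases hj : Nat.find h with _ | j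
    · exact hb0.trans_le N.zero_le
    · exact not_lt.1 (Nat.find_min h (hj.symm ▸ j.lt_succ_self))
  choose j hj using hex
  refine ⟨j, tendsto_atTop.2 fun K => (eventually_ge_atTop (b K)).mono fun N hN => ?_, hj⟩
  exact Nat.lt_succ_iff.1 (hb.lt_iff_lt.1 (hN.trans_lt (hj N).2))

theorem isLittleO_sum_range_of_blocks {E : Type*} [NormedAddCommGroup E] {f : ℕ → E}
    (hf : ∀ n, ‖f n‖ ≤ 1) {b : ℕ → ℕ} (hb : StrictMono b) (hb0 : b 0 = 0)
    (hgap : (fun j => ((b (j + 1) - b j : ℕ) : ℝ)) =o[atTop] fun j => (b j : ℝ))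
    (hblock : (fun j => ∑ n ∈ Finset.Ico (b j) (b (j + 1)), f n) =o[atTop]
      fun j => ((b (j + 1) - b j : ℕ) : ℝ)) :
    (fun N => ∑ n ∈ Finset.range N, f n) =o[atTop] fun N => (N : ℝ) := by
  have htelescope (j : ℕ) : ∑ i ∈ Finset.range j, ((b (i + 1) - b i : ℕ) : ℝ) = b j := by
    rw [← Nat.cast_sum, Finset.sum_range_tsub hb.monotone, hb0, Nat.sub_zero]
  have hsum (j : ℕ) : ∑ i ∈ Finset.range j, ∑ n ∈ Finset.Ico (b i) (b (i + 1)), f n =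
      ∑ n ∈ Finset.range (b j), f n := by
    induction j with
    | zero => simp [hb0]
    | succ j ih =>
      rw [Finset.sum_range_succ, ih, Finset.sum_range_add_sum_Ico _ (hb.monotone j.le_succ)]
  have hstart := hblock.sum_range (fun _ => Nat.cast_nonneg _) <| by
    simpa only [htelescope, Function.comp_def] using
      tendsto_natCast_atTop_atTop.comp hb.tendsto_atTop
  simp only [hsum, htelescope] at hstart
  obtain ⟨j, hj, hmem⟩ := exists_tendsto_and_mem_Ico hb hb0
  have htail : (fun N => ∑ n ∈ Finset.Ico (b (j N)) N, f n) =o[atTop] fun N => (b (j N) : ℝ) := by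
    refine (Asymptotics.IsBigO.of_norm_le fun N => ?_).trans_isLittleO (hgap.comp_tendsto hj)
    refine (norm_sum_Ico_le hf _ _).trans ?_
    exact Nat.cast_le.2 (Nat.sub_le_sub_right (hmem N).2.le _)
  refine ((hstart.comp_tendsto hj).add htail).trans_isBigO
    (Asymptotics.IsBigO.of_norm_le fun N => ?_) |>.congr_left fun N =>
      Finset.sum_range_add_sum_Ico f (hmem N).1
  simpa using (hmem N).1

theorem tendsto_expect_zero_iff_isLittleO {ι κ : Type*} {l : Filter ι} {s : ι → Finset κ}
    {f : κ → ℂ} : Tendsto (fun i => 𝔼 n ∈ s i, f n) l (𝓝 0) ↔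
      (fun i => ∑ n ∈ s i, f n) =o[l] fun i => ((s i).card : ℝ) := by
  rw [tendsto_zero_iff_norm_tendsto_zero, ← Asymptotics.isLittleO_norm_left,
    Asymptotics.isLittleO_iff_tendsto fun i hi => by simp_all]
  simp only [Finset.expect_eq_sum_div_card, norm_div, Complex.norm_natCast]

theorem tendsto_expect_range_of_blocks {f : ℕ → ℂ} (hf : ∀ n, ‖f n‖ ≤ 1) {b : ℕ → ℕ}
    (hb : StrictMono b) (hb0 : b 0 = 0)
    (hgap : (fun j => ((b (j + 1) - b j : ℕ) : ℝ)) =o[atTop] fun j => (b j : ℝ))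
    (hblock : Tendsto (fun j => 𝔼 n ∈ Finset.Ico (b j) (b (j + 1)), f n) atTop (𝓝 0)) :
    Tendsto (fun N => 𝔼 n ∈ Finset.range N, f n) atTop (𝓝 0) := by
  rw [tendsto_expect_zero_iff_isLittleO] at hblock ⊢
  simp only [Nat.card_Ico, Finset.card_range] at hblock ⊢
  exact isLittleO_sum_range_of_blocks hf hb hb0 hgap hblock

end Blocks

section Construction

/-- The digits of `ω` below position `b` make the exponential sums over `I` of all frequencies as
small as random digits at the positions in `[a, b)` do in mean square, up to factors depending only
on the frequency. -/
def IsTypicalOn (p Q : ℕ) (I : Finset ℕ) (a b : ℕ) (ω : ℕ → Bool) : Prop :=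
  ∀ h : ℕ, (1 / 2 : ℝ) ^ h * ‖𝔼 n ∈ I, (𝐞 ((h + 1 : ℕ) * (p : ℝ) ^ n *
      ∑ k ∈ Finset.range b with ω k, (Q : ℝ)⁻¹ ^ (k + 1)) : ℂ)‖ ^ 2 ≤
    totalCorrelation p Q I (Finset.Ico a b)

theorem IsTypicalOn.congr {p Q : ℕ} {I : Finset ℕ} {a b : ℕ} {ω ω' : ℕ → Bool}
    (hω : IsTypicalOn p Q I a b ω) (h : ∀ k < b, ω k = ω' k) : IsTypicalOn p Q I a b ω' := by
  have hfilter : ({k ∈ Finset.range b | ω k} : Finset ℕ) = {k ∈ Finset.range b | ω' k} :=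
    Finset.filter_congr fun k hk => by rw [h k (Finset.mem_range.1 hk)]
  simpa only [IsTypicalOn, hfilter] using hω

theorem exists_isTypicalOn (p Q : ℕ) (I : Finset ℕ) {a b : ℕ} (hab : a ≤ b) (ω : ℕ → Bool) :
    ∃ ω' : ℕ → Bool, (∀ k < a, ω' k = ω k) ∧ IsTypicalOn p Q I a b ω' := by
  obtain ⟨S, hS, hle⟩ := exists_subset_forall_norm_expect_fourierChar_sq_le p Q I (Finset.Ico a b)
    (∑ k ∈ Finset.range a with ω k, (Q : ℝ)⁻¹ ^ (k + 1))
  let ω' (k : ℕ) : Bool := if k < a then ω k else decide (k ∈ S)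
  have hlow {k : ℕ} (hk : k < a) : ω' k = ω k := if_pos hk
  have hhigh : ({k ∈ Finset.Ico a b | ω' k} : Finset ℕ) = S := by
    have (k : ℕ) (hk : k ∈ Finset.Ico a b) : ω' k ↔ k ∈ S := by
      simp [ω', (Finset.mem_Ico.1 hk).1.not_gt]
    rw [Finset.filter_congr this, Finset.filter_mem_eq_inter, Finset.inter_eq_right.2 hS]
  have hsum : ∑ k ∈ Finset.range b with ω' k, (Q : ℝ)⁻¹ ^ (k + 1) =
      (∑ k ∈ Finset.range a with ω k, (Q : ℝ)⁻¹ ^ (k + 1)) + ∑ k ∈ S, (Q : ℝ)⁻¹ ^ (k + 1) := by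
    rw [Finset.sum_filter, ← Finset.sum_range_add_sum_Ico _ hab, ← Finset.sum_filter,
      ← Finset.sum_filter, hhigh]
    congr 2
    exact Finset.filter_congr fun k hk => by rw [hlow (Finset.mem_range.1 hk)]
  exact ⟨ω', fun k => hlow, by simpa only [IsTypicalOn, hsum] using hle⟩

theorem exists_injective_forall_isTypicalOn (p Q : ℕ) (I : ℕ → Finset ℕ) {a : ℕ → ℕ}
    (ha : StrictMono a) : ∃ Φ : (ℕ → Bool) → ℕ → Bool, Function.Injective Φ ∧
      ∀ s j, IsTypicalOn p Q (I j) (a j + 1) (a (j + 1)) (Φ s) := by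
  choose Φ hfree htypical using exists_seq_apply_eq_and_forall ha
    (G := fun j (ω : ℕ → Bool) => IsTypicalOn p Q (I j) (a j + 1) (a (j + 1)) ω)
    (fun _ _ _ h hω => hω.congr h) fun j ω => by
      simpa only [Nat.lt_succ_iff] using exists_isTypicalOn p Q (I j) (ha j.lt_succ_self) ω
  exact ⟨Φ, fun s t hst => funext fun j => by rw [← hfree s, hst, hfree], htypical⟩

theorem norm_expect_fourierChar_sub_le {p : ℕ} (hp : 2 ≤ p) (h M L : ℕ) {x y : ℝ}
    (hxy : |x - y| ≤ ((p : ℝ) ^ (M + L))⁻¹) :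
    ‖(𝔼 n ∈ Finset.Ico M (M + L), (𝐞 (h * (p : ℝ) ^ n * x) : ℂ)) -
      𝔼 n ∈ Finset.Ico M (M + L), (𝐞 (h * (p : ℝ) ^ n * y) : ℂ)‖ ≤ 2 * Real.pi * h / L := by
  have hgeom : ∑ n ∈ Finset.Ico M (M + L), (p : ℝ) ^ n ≤ (p : ℝ) ^ (M + L) := by
    exact_mod_cast (Nat.geomSum_lt hp fun n hn => (Finset.mem_Ico.1 hn).2).le
  rw [← Finset.expect_sub_distrib, Finset.expect_eq_sum_div_card, norm_div, Complex.norm_natCast,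
    Nat.card_Ico, Nat.add_sub_cancel_left]
  gcongr
  calc ‖∑ n ∈ Finset.Ico M (M + L),
          ((𝐞 (h * (p : ℝ) ^ n * x) : ℂ) - 𝐞 (h * (p : ℝ) ^ n * y))‖
      ≤ ∑ n ∈ Finset.Ico M (M + L), 2 * Real.pi * (h * (p : ℝ) ^ n * |x - y|) := by
        refine norm_sum_le_of_le _ fun n _ => (norm_fourierChar_sub_le _ _).trans_eq ?_
        rw [← mul_sub, abs_mul, abs_of_nonneg (a := h * (p : ℝ) ^ n) (by positivity)]
    _ = 2 * Real.pi * h * ((∑ n ∈ Finset.Ico M (M + L), (p : ℝ) ^ n) * |x - y|) := by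
        simp only [Finset.sum_mul, Finset.mul_sum, mul_assoc]
    _ ≤ 2 * Real.pi * h * ((p : ℝ) ^ (M + L) * ((p : ℝ) ^ (M + L))⁻¹) := by gcongr
    _ = 2 * Real.pi * h := by rw [mul_inv_cancel₀ (by positivity), mul_one]

theorem tendsto_expect_fourierChar_realOfBits {ι : Type*} {l : Filter ι} {p Q : ℕ} (hp : 2 ≤ p)
    (hQ : 2 ≤ Q) (hpQ : ∀ r s : ℕ, 0 < r → 0 < s → p ^ r ≠ Q ^ s) {M L a b : ι → ℕ}
    (hL : Tendsto L l atTop) {c : ℕ} (ha : ∀ i, Q ^ a i ≤ c * p ^ M i)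
    (hb : ∀ i, p ^ (M i + L i) ≤ Q ^ b i) {ω : ℕ → Bool}
    (hω : ∀ i, IsTypicalOn p Q (Finset.Ico (M i) (M i + L i)) (a i) (b i) ω)
    {h : ℕ} (hh : 0 < h) :
    Tendsto (fun i => 𝔼 n ∈ Finset.Ico (M i) (M i + L i),
      (𝐞 (h * (p : ℝ) ^ n * realOfBits Q ω) : ℂ)) l (𝓝 0) := by
  obtain ⟨h, rfl⟩ := Nat.exists_eq_add_one.2 hh
  have htrunc : Tendsto (fun i => 𝔼 n ∈ Finset.Ico (M i) (M i + L i),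
      (𝐞 ((h + 1 : ℕ) * (p : ℝ) ^ n *
        ∑ k ∈ Finset.range (b i) with ω k, (Q : ℝ)⁻¹ ^ (k + 1)) : ℂ)) l (𝓝 0) := by
    have hlim := (tendsto_totalCorrelation hp hQ hpQ hL ha hb).const_mul ((2 : ℝ) ^ h)
    rw [mul_zero] at hlim
    rw [tendsto_zero_iff_norm_tendsto_zero]
    refine squeeze_zero (fun _ => norm_nonneg _) (fun i => Real.le_sqrt_of_sq_le ?_) <| by
      simpa only [Real.sqrt_zero] using hlim.sqrt
    have := mul_le_mul_of_nonneg_left (hω i h) (by positivity : (0 : ℝ) ≤ 2 ^ h)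
    rwa [← mul_assoc, ← mul_pow, mul_one_div_cancel two_ne_zero, one_pow, one_mul] at this
  have hdiff := squeeze_zero_norm
    (fun i => norm_expect_fourierChar_sub_le hp (h + 1) (M i) (L i)
      ((abs_realOfBits_sub_sum_le hQ ω (b i)).trans <|
        inv_anti₀ (by positivity) (by exact_mod_cast hb i)))
    ((tendsto_const_div_atTop_nhds_zero_nat _).comp hL)
  simpa only [sub_add_cancel, add_zero] using hdiff.add htrunc

theorem pow_clog_le {b n : ℕ} (hb : 1 < b) (hn : 0 < n) : b ^ Nat.clog b n ≤ b * n := by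
  rcases Nat.succ_le_of_lt hn |>.eq_or_lt with rfl | hn
  · simpa using hb.le
  · rw [← Nat.succ_pred_eq_of_pos (Nat.clog_pos hb hn), pow_succ']
    exact Nat.mul_le_mul_left _ (Nat.pow_pred_clog_lt_self hb hn).le

theorem strictMono_clog_pow {p Q : ℕ} (hp : 2 ≤ p) (hQ : 2 ≤ Q) {M : ℕ → ℕ}
    (hM : ∀ j, M j + Q ≤ M (j + 1)) : StrictMono fun j => Nat.clog Q (p ^ M j) := by
  refine strictMono_nat_of_lt_succ fun j => (Nat.lt_clog_iff_pow_lt hQ).2 ?_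
  calc Q ^ Nat.clog Q (p ^ M j) ≤ Q * p ^ M j := pow_clog_le hQ (by positivity)
    _ < p ^ Q * p ^ M j := Nat.mul_lt_mul_of_pos_right (Nat.lt_pow_self hp) (by positivity)
    _ = p ^ (M j + Q) := by rw [pow_add, mul_comm]
    _ ≤ p ^ M (j + 1) := Nat.pow_le_pow_right (by omega) (hM j)

theorem isNormal_of_tendsto_expect_blocks {p : ℕ} {x : ℝ} (hx : 0 ≤ x) {b : ℕ → ℕ}
    (hb : StrictMono b) (hb0 : b 0 = 0)
    (hgap : (fun j => ((b (j + 1) - b j : ℕ) : ℝ)) =o[atTop] fun j => (b j : ℝ))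
    (hblock : ∀ h : ℕ, 0 < h → Tendsto
      (fun j => 𝔼 n ∈ Finset.Ico (b j) (b (j + 1)), (𝐞 (h * (p : ℝ) ^ n * x) : ℂ)) atTop (𝓝 0)) :
    IsNormal p x := by
  refine isNormal_of_equidistributedAlong hx <| .of_fourierChar
    ((eventually_gt_atTop 0).mono fun N hN => Finset.nonempty_range_iff.2 hN.ne') fun h hh => ?_
  simp only [mul_comm x, ← mul_assoc]
  exact tendsto_expect_range_of_blocks (fun n => (Circle.norm_coe _).le) hb hb0 hgap (hblock h hh)

theorem isLittleO_mul_succ_sq_sub (Q : ℕ) :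
    (fun j : ℕ => ((Q * (j + 1) ^ 2 - Q * j ^ 2 : ℕ) : ℝ)) =o[atTop]
      fun j : ℕ => ((Q * j ^ 2 : ℕ) : ℝ) := by
  have hlinear : (fun j : ℕ => (2 * j + 1 : ℝ)) =O[atTop] fun j : ℕ => (j : ℝ) ^ 1 :=
    .of_bound 3 <| (eventually_ge_atTop 1).mono fun j hj => by
      have : (1 : ℝ) ≤ j := by exact_mod_cast hj
      rw [Real.norm_of_nonneg (by positivity), Real.norm_of_nonneg (by positivity)]
      linarith
  have hsq : (fun j : ℕ => (2 * j + 1 : ℝ)) =o[atTop] fun j : ℕ => (j : ℝ) ^ 2 :=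
    hlinear.trans_isLittleO <|
      (Asymptotics.isLittleO_pow_pow_atTop_of_lt one_lt_two).comp_tendsto
        tendsto_natCast_atTop_atTop
  refine ((Asymptotics.isBigO_refl (fun _ => (Q : ℝ)) atTop).mul_isLittleO hsq).congr
    (fun j => ?_) fun j => by push_cast; rfl
  rw [show Q * (j + 1) ^ 2 = Q * (2 * j + 1) + Q * j ^ 2 by ring, Nat.add_sub_cancel]
  push_cast
  rfl

theorem exists_injective_isNormal_realOfBits {p Q : ℕ} (hp : 2 ≤ p) (hQ : 2 ≤ Q)
    (hpQ : ∀ r s : ℕ, 0 < r → 0 < s → p ^ r ≠ Q ^ s) :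
    ∃ Φ : (ℕ → Bool) → ℕ → Bool, Function.Injective Φ ∧
      ∀ s, IsNormal p (realOfBits Q (Φ s)) := by
  let M (j : ℕ) : ℕ := Q * j ^ 2
  let L (j : ℕ) : ℕ := Q * (2 * j + 1)
  let a (j : ℕ) : ℕ := Nat.clog Q (p ^ M j)
  have hML (j : ℕ) : M j + L j = M (j + 1) := by ring
  have hgap (j : ℕ) : M j + Q ≤ M (j + 1) :=
    (hML j).symm ▸ Nat.add_le_add_left (Nat.le_mul_of_pos_right _ (by omega)) _
  have ha : StrictMono a := strictMono_clog_pow hp hQ hgap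
  have hlow (j : ℕ) : Q ^ (a j + 1) ≤ Q ^ 2 * p ^ M j := by
    rw [pow_succ', sq, mul_assoc]
    exact Nat.mul_le_mul_left _ (pow_clog_le hQ (by positivity))
  have hhigh (j : ℕ) : p ^ (M j + L j) ≤ Q ^ a (j + 1) := (hML j).symm ▸ Nat.le_pow_clog hQ _
  have hL : Tendsto L atTop atTop :=
    tendsto_atTop_mono (fun j => by dsimp only [L, id]; nlinarith) tendsto_id
  obtain ⟨Φ, hΦ, htypical⟩ :=
    exists_injective_forall_isTypicalOn p Q (fun j => Finset.Ico (M j) (M j + L j)) ha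
  refine ⟨Φ, hΦ, fun s => isNormal_of_tendsto_expect_blocks (realOfBits_nonneg ..)
    (strictMono_nat_of_lt_succ fun j => (by have := hgap j; omega : M j < M (j + 1)))
    (by simp [M]) (isLittleO_mul_succ_sq_sub Q) fun h hh => ?_⟩
  simp only [← hML]
  exact tendsto_expect_fourierChar_realOfBits hp hQ hpQ hL hlow hhigh (htypical s) hh

end Construction

/-- **Schmidt, part 2**: if `p^r ≠ q^s` for all positive integers `r, s`, then the set of
`x ∈ [0,1)` normal to base `p` but not simply normal to base `q` has the cardinality of the
continuum. -/
theorem schmidt_inequivalent_bases (p q : ℕ) (hp : 2 ≤ p) (hq : 2 ≤ q)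
    (hpq : ∀ r s : ℕ, 0 < r → 0 < s → p ^ r ≠ q ^ s) :
    Cardinal.mk
      ({x : ℝ | x ∈ Set.Ico (0 : ℝ) 1 ∧ IsNormal p x ∧ ¬ IsSimplyNormal q x}) =
      Cardinal.continuum := by
  have hQ : 3 ≤ q ^ 3 := (Nat.lt_pow_self hq : 3 < q ^ 3).le
  obtain ⟨Φ, hΦ, hnormal⟩ := exists_injective_isNormal_realOfBits hp (by omega : 2 ≤ q ^ 3)
    fun r s hr hs => by simpa only [← pow_mul] using hpq r (3 * s) hr (by omega)
  have hmem : Set.range (realOfBits (q ^ 3) ∘ Φ) ⊆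
      {x : ℝ | x ∈ Set.Ico (0 : ℝ) 1 ∧ IsNormal p x ∧ ¬ IsSimplyNormal q x} :=
    Set.range_subset_iff.2 fun s => ⟨⟨realOfBits_nonneg .., realOfBits_lt_one hQ _⟩, hnormal s,
      not_isSimplyNormal_realOfBits hq _⟩
  refine le_antisymm ((Cardinal.mk_set_le _).trans_eq Cardinal.mk_real) ?_
  calc Cardinal.continuum = Cardinal.mk (ℕ → Bool) := by simp
    _ = Cardinal.mk (Set.range (realOfBits (q ^ 3) ∘ Φ)) :=
      (Cardinal.mk_range_eq _ ((realOfBits_injective hQ).comp hΦ)).symm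
    _ ≤ _ := Cardinal.mk_le_mk_of_subset hmem
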